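/- arXiv:1004.4980 — 5 statements merged into one kernel-verified Lean document; each statement's English description precedes it below -/
import Mathlib

section
/- Let G be a bipartite graph and let α_1 ≤ α_2 ≤ … ≤ α_d be a multichain of basic 1-covers of G in the poset P(G). Then the function α_1 + α_2 + … + α_d (pointwise sum) is a basic d-cover of G. -/
/-- A `k`-cover of a graph `G`: a function on the vertices such that the values at the two
endpoints of every edge sum to at least `k`. -/
def IsCover {n : ℕ} (G : SimpleGraph (Fin n)) (k : ℕ) (α : Fin n → ℕ) : Prop :=
  ∀ ⦃i j : Fin n⦄, G.Adj i j → k ≤ α i + α j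

/-- A basic `k`-cover: a `k`-cover such that no pointwise smaller function is a `k`-cover. -/
def IsBasicCover {n : ℕ} (G : SimpleGraph (Fin n)) (k : ℕ) (α : Fin n → ℕ) : Prop :=
  IsCover G k α ∧ ∀ β : Fin n → ℕ, β ≤ α → IsCover G k β → β = α

/-- The partial order on basic 1-covers of a bipartite graph with parts `A` and `Aᶜ`:
`α ≤ β` iff `α a ≤ β a` for all `a ∈ A`. -/
def pLe {n : ℕ} (A : Finset (Fin n)) (α β : Fin n → ℕ) : Prop :=
  ∀ a ∈ A, α a ≤ β a

/-!
A cover is basic iff every vertex of positive weight lies on a tight edge. Hence a sum of covers is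
basic as soon as, at every vertex of positive weight, the summands share a tight edge. In a chain of
basic 1-covers whose weights on the neighbours of `v` decrease, take an edge at `v` that is tight in
the first member giving `v` positive weight. It is tight in all members: afterwards its far end
keeps weight `0`, and before that covering the edge forces weight `1` there. Basic covers that
increase on one side of the bipartition decrease on the other, so this applies to one side directly
and to the other after reversing the chain.
-/

section

variable {n k : ℕ} {G : SimpleGraph (Fin n)} {α β : Fin n → ℕ}

theorem IsCover.update_sub_one (hα : IsCover G k α) {v : Fin n}
    (hv : ∀ w, G.Adj v w → k < α v + α w) :
    IsCover G k (Function.update α v (α v - 1)) := by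
  intro i j hij
  have hcov := hα hij
  rcases eq_or_ne i v with rfl | hi
  · have := hv j hij
    simp only [Function.update_self, Function.update_of_ne hij.ne']
    lia
  rcases eq_or_ne j v with rfl | hj
  · have := hv i hij.symm
    simp only [Function.update_self, Function.update_of_ne hi]
    lia
  · simpa only [Function.update_of_ne hi, Function.update_of_ne hj] using hcov

theorem IsBasicCover.exists_adj_add_eq (hα : IsBasicCover G k α) {v : Fin n} (hv : 0 < α v) :
    ∃ w, G.Adj v w ∧ α v + α w = k := by
  by_contra! hne
  have hlt : ∀ w, G.Adj v w → k < α v + α w := fun w hw =>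
    (hα.1 hw).lt_of_ne (hne w hw).symm
  have hle : Function.update α v (α v - 1) ≤ α :=
    update_le_self_iff.2 (Nat.sub_le _ _)
  have heq : α v - 1 = α v :=
    Function.update_eq_self_iff.1 (hα.2 _ hle (hα.1.update_sub_one hlt))
  lia

theorem IsCover.isBasicCover_of_forall_exists_adj_add_eq (hα : IsCover G k α)
    (htight : ∀ v, 0 < α v → ∃ w, G.Adj v w ∧ α v + α w = k) : IsBasicCover G k α := by
  refine ⟨hα, fun β hβα hβ => funext fun v => (hβα v).antisymm ?_⟩
  rcases (α v).eq_zero_or_pos with hv | hv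
  · exact hv.trans_le (Nat.zero_le _)
  · obtain ⟨w, hvw, htight⟩ := htight v hv
    have hcov : k ≤ β v + β w := hβ hvw
    have hle : β w ≤ α w := hβα w
    lia

theorem IsBasicCover.apply_le (hα : IsBasicCover G k α) (v : Fin n) : α v ≤ k := by
  rcases (α v).eq_zero_or_pos with hv | hv
  · exact hv.trans_le (Nat.zero_le k)
  · obtain ⟨w, -, htight⟩ := hα.exists_adj_add_eq hv
    exact htight ▸ Nat.le_add_right _ _

theorem IsBasicCover.apply_le_apply_of_forall_adj (hβ : IsBasicCover G k β) (hα : IsCover G k α)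
    {v : Fin n} (hle : ∀ w, G.Adj v w → α w ≤ β w) : β v ≤ α v := by
  rcases (β v).eq_zero_or_pos with hv | hv
  · exact hv.trans_le (Nat.zero_le _)
  · obtain ⟨w, hvw, htight⟩ := hβ.exists_adj_add_eq hv
    have hcov : k ≤ α v + α w := hα hvw
    have hw : α w ≤ β w := hle w hvw
    lia

end

section

variable {ι : Type*} {n : ℕ} {G : SimpleGraph (Fin n)} {c : ι → Fin n → ℕ}

theorem IsCover.sum {s : Finset ι} {k : ι → ℕ} (hc : ∀ i ∈ s, IsCover G (k i) (c i)) :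
    IsCover G (∑ i ∈ s, k i) (fun v => ∑ i ∈ s, c i v) := fun u v huv =>
  calc ∑ i ∈ s, k i ≤ ∑ i ∈ s, (c i u + c i v) := Finset.sum_le_sum fun i hi => hc i hi huv
    _ = ∑ i ∈ s, c i u + ∑ i ∈ s, c i v := Finset.sum_add_distrib

theorem isBasicCover_sum_of_forall_exists_adj_add_eq {s : Finset ι} {k : ι → ℕ}
    (hc : ∀ i ∈ s, IsCover G (k i) (c i))
    (htight : ∀ v, (∃ i ∈ s, 0 < c i v) → ∃ w, G.Adj v w ∧ ∀ i ∈ s, c i v + c i w = k i) :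
    IsBasicCover G (∑ i ∈ s, k i) (fun v => ∑ i ∈ s, c i v) := by
  refine (IsCover.sum hc).isBasicCover_of_forall_exists_adj_add_eq fun v hv => ?_
  obtain ⟨w, hvw, hw⟩ := htight v (Finset.sum_pos_iff.1 hv)
  exact ⟨w, hvw, Finset.sum_add_distrib.symm.trans (Finset.sum_congr rfl hw)⟩

theorem exists_adj_forall_add_eq_one_of_antitone [LinearOrder ι] [WellFoundedLT ι]
    (hc : ∀ i, IsBasicCover G 1 (c i)) {v : Fin n}
    (hanti : ∀ w, G.Adj v w → Antitone fun i => c i w) (hv : ∃ i, 0 < c i v) :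
    ∃ w, G.Adj v w ∧ ∀ i, c i v + c i w = 1 := by
  obtain ⟨m, hm⟩ := exists_minimal_of_wellFoundedLT (fun i => 0 < c i v) hv
  obtain ⟨w, hvw, htight⟩ := (hc m).exists_adj_add_eq hm.prop
  have hm_pos : 0 < c m v := hm.prop
  refine ⟨w, hvw, fun i => ?_⟩
  have hcov : 1 ≤ c i v + c i w := (hc i).1 hvw
  have hiv : c i v ≤ 1 := (hc i).apply_le v
  have hiw : c i w ≤ 1 := (hc i).apply_le w
  rcases lt_or_ge i m with him | hmi
  · have hzero : ¬0 < c i v := hm.not_prop_of_lt him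
    lia
  · have hle : c i w ≤ c m w := hanti w hvw hmi
    lia

theorem exists_adj_forall_add_eq_one_of_monotone [LinearOrder ι] [WellFoundedGT ι]
    (hc : ∀ i, IsBasicCover G 1 (c i)) {v : Fin n}
    (hmono : ∀ w, G.Adj v w → Monotone fun i => c i w) (hv : ∃ i, 0 < c i v) :
    ∃ w, G.Adj v w ∧ ∀ i, c i v + c i w = 1 :=
  exists_adj_forall_add_eq_one_of_antitone (ι := ιᵒᵈ) (c := fun i => c i.ofDual)
    (fun i => hc i.ofDual) (fun w hvw => (hmono w hvw).dual_left) hv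

end

/-- If `G` is a bipartite graph (with bipartition `A ∪ Aᶜ`, `|A| ≤ |Aᶜ|`,
no isolated vertices) and `c 1 ≤ … ≤ c d` is a multichain of basic 1-covers in the poset
`P(G)`, then the pointwise sum `v ↦ ∑ i, c i v` is a basic `d`-cover of `G`. -/
theorem sum_of_multichain_isBasicCover {n d : ℕ} (hd : 0 < d) (G : SimpleGraph (Fin n))
    (A : Finset (Fin n))
    (hbip : ∀ i j : Fin n, G.Adj i j → (i ∈ A ↔ j ∉ A))
    (hcard : A.card ≤ Aᶜ.card)
    (hiso : ∀ v : Fin n, ∃ w, G.Adj v w)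
    (c : Fin d → (Fin n → ℕ))
    (hbasic : ∀ i, IsBasicCover G 1 (c i))
    (hchain : ∀ i j : Fin d, i ≤ j → pLe A (c i) (c j)) :
    IsBasicCover G d (fun v => ∑ i, c i v) := by
  have htight (v : Fin n) (hv : ∃ i, 0 < c i v) :
      ∃ w, G.Adj v w ∧ ∀ i, c i v + c i w = 1 := by
    by_cases hvA : v ∈ A
    · refine exists_adj_forall_add_eq_one_of_antitone hbasic (fun w hvw i j hij => ?_) hv
      have hwA : w ∉ A := (hbip v w hvw).1 hvA
      exact (hbasic j).apply_le_apply_of_forall_adj (hbasic i).1 fun a hwa =>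
        hchain i j hij a ((hbip a w hwa.symm).2 hwA)
    · refine exists_adj_forall_add_eq_one_of_monotone hbasic (fun w hvw i j hij => ?_) hv
      exact hchain i j hij w ((hbip w v hvw.symm).2 hvA)
  simpa using isBasicCover_sum_of_forall_exists_adj_add_eq (s := Finset.univ) (k := fun _ => 1)
    (fun i _ => (hbasic i).1) (by simpa using htight)
end

section
/- Let G be a connected graph and K a field. The Krull dimension of the symbolic fiber cone Ā(G) of the cover ideal J(G) equals the graphical dimension of G: dim Ā(G) = gdim(G). -/
open MvPolynomial

/-- The polynomial ring `S[t] = K[x_1,…,x_n][t]`, realised as a polynomial ring in the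
variables `some i ↦ x_i` and `none ↦ t`. -/
abbrev St (K : Type*) [Field K] (n : ℕ) := MvPolynomial (Option (Fin n)) K

/-- The element `x₁^{α 1} ⋯ x_n^{α n} · t^k` of `S[t]`. -/
noncomputable def coverMonomial (K : Type*) [Field K] {n : ℕ} (α : Fin n → ℕ) (k : ℕ) :
    St K n :=
  MvPolynomial.monomial (Finsupp.equivFunOnFinite.symm (fun o => o.elim k α)) 1

/-- The symbolic Rees algebra `A(G) = ⊕_k J(G)^{(k)} t^k = K[x^α t^k : α a k-cover]` of the
cover ideal of `G`, as a subalgebra of `S[t]`. -/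
noncomputable def symbolicRees (K : Type*) [Field K] {n : ℕ} (G : SimpleGraph (Fin n)) :
    Subalgebra K (St K n) :=
  Algebra.adjoin K {p | ∃ k : ℕ, ∃ α : Fin n → ℕ, IsCover G k α ∧ p = coverMonomial K α k}

/-- The ideal `m·A(G)` of `A(G)`, generated by the variables `x_i = x_i t^0`. -/
noncomputable def irrelevantIdeal (K : Type*) [Field K] {n : ℕ} (G : SimpleGraph (Fin n)) :
    Ideal (symbolicRees K G) :=
  Ideal.span {a : symbolicRees K G | ∃ i : Fin n, (a : St K n) = MvPolynomial.X (some i)}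

/-- The symbolic fiber cone `Ā(G) = A(G)/mA(G)` of the cover ideal of `G`. -/
noncomputable def symbolicFiberCone (K : Type*) [Field K] {n : ℕ}
    (G : SimpleGraph (Fin n)) : Type _ :=
  symbolicRees K G ⧸ irrelevantIdeal K G

noncomputable instance (K : Type*) [Field K] {n : ℕ} (G : SimpleGraph (Fin n)) :
    CommRing (symbolicFiberCone K G) :=
  Ideal.Quotient.commRing (irrelevantIdeal K G)

/-- A free parameter pair. -/
def IsFreeParameterPair {n r : ℕ} (G : SimpleGraph (Fin n)) (a b : Fin r → Fin n) : Prop :=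
  Function.Injective a ∧ Function.Injective b ∧
  (∀ i j : Fin r, ¬ G.Adj (a i) (a j)) ∧
  (∀ i j : Fin r, a i ≠ b j) ∧
  (∀ i : Fin r, G.Adj (a i) (b i)) ∧
  (∀ i j : Fin r, G.Adj (a i) (b j) → i ≤ j)

/-- `G` has a free parameter set of cardinality `r`. -/
def HasFreeParameterSet {n : ℕ} (G : SimpleGraph (Fin n)) (r : ℕ) : Prop :=
  ∃ a b : Fin r → Fin n, IsFreeParameterPair G a b

/-- The graphical dimension. -/
noncomputable def gdim {n : ℕ} (G : SimpleGraph (Fin n)) : ℕ :=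
  sSup {r : ℕ | HasFreeParameterSet G r} + 1

/-!
If a finite-dimensional subspace `V` containing `1` generates a `K`-algebra `B`, and `dim V ^ m`
grows like `m ^ e`, then comparison with a Noether normalization gives `dim B = e`.

A `k`-cover with `k ≥ 2` is the sum of a `(k - 2)`-cover and a `2`-cover, so the symbolic fiber cone
is generated by the span `V` of the classes of `x^α t^k` with `k ≤ 2`. The classes coming from basic
`k`-covers with `k ≤ 2 * m` form a basis of `V ^ m`, so the question is how fast the number of basic
covers grows.

* Every value of a basic `k`-cover `α` is `0`, `k / 2`, `w` or `k - w`, where `w < k / 2` is the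
  value at the lower end of an edge on which the cover inequality is tight. Choosing one such edge
  for each `w` yields a free parameter set, so `α` is determined by `k`, at most `gdim G - 1` values
  `w`, and bounded further data.
* Conversely, values at most `k / 2`, weakly decreasing along a free parameter set, extend to
  a basic `k`-cover.
-/

theorem ringKrullDim_eq_of_isIntegral (R S : Type*) [CommRing R] [CommRing S] [Algebra R S]
    [FaithfulSMul R S] [Algebra.IsIntegral R S] : ringKrullDim S = ringKrullDim R := by
  refine le_antisymm ?_ (iSup_le fun l ↦ ?_)
  · exact Order.krullDim_le_of_strictMono (PrimeSpectrum.comap (algebraMap R S)) fun p q hpq ↦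
      Ideal.IsIntegral.comap_lt_comap (R := R) (I := p.asIdeal) (J := q.asIdeal) hpq
  · obtain ⟨P, _, _⟩ := Ideal.nonempty_primesOver (S := S) l.head.asIdeal
    obtain ⟨L, hL, -⟩ := Ideal.exists_ltSeries_of_hasGoingUp (S := S) l P
    rw [← hL]
    exact Order.LTSeries.length_le_krullDim L

theorem le_of_forall_pow_le_mul_pow {a b D : ℕ} (h : ∀ m, 1 ≤ m → m ^ a ≤ D * m ^ b) : a ≤ b := by
  by_contra! hab
  have hD : (D + 1) ^ (b + 1) ≤ D * (D + 1) ^ b :=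
    (Nat.pow_le_pow_right D.succ_pos hab).trans (h (D + 1) (by lia))
  have hpos : 0 < (D + 1) ^ b := by positivity
  rw [pow_succ] at hD
  nlinarith

theorem le_of_pow_le_of_le_mul_pow {f : ℕ → ℕ} {a b c C : ℕ} (hlower : ∀ m, m ^ a ≤ f (c * m))
    (hupper : ∀ m, f m ≤ C * (m + 1) ^ b) : a ≤ b := by
  refine le_of_forall_pow_le_mul_pow (D := C * (c + 1) ^ b) fun m hm ↦ ?_
  calc m ^ a ≤ C * (c * m + 1) ^ b := (hlower m).trans (hupper _)
    _ ≤ C * ((c + 1) * m) ^ b := by gcongr; lia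
    _ = C * (c + 1) ^ b * m ^ b := by rw [mul_pow, mul_assoc]

theorem exists_le_of_fg_of_iSup_eq_top {R M : Type*} [Semiring R] [AddCommMonoid M] [Module R M]
    {F : ℕ → Submodule R M} (hF : Monotone F) (htop : ⨆ m, F m = ⊤) {N : Submodule R M}
    (hN : N.FG) : ∃ m, N ≤ F m := by
  obtain ⟨s, hs⟩ := CompleteLattice.IsCompactElement.exists_finset_of_le_iSup _
    ((Submodule.fg_iff_compact N).mp hN) F (htop ▸ le_top)
  exact ⟨s.sup id, hs.trans (iSup₂_le fun m hm ↦ hF (Finset.le_sup (f := id) hm))⟩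

open scoped Pointwise in
theorem restrictDegree_add (σ R : Type*) [CommSemiring R] (k l : ℕ) :
    restrictDegree σ R (k + l) = restrictDegree σ R k * restrictDegree σ R l := by
  rw [restrictDegree, restrictDegree, restrictDegree, ← restrictSupport_add]
  congr 1
  refine Set.Subset.antisymm (fun u hu ↦ ?_) (Set.add_subset_iff.mpr fun u hu v hv i ↦
    add_le_add (hu i) (hv i))
  let v : σ →₀ ℕ := u.mapRange (min k) (min_zero _)
  have hv : v ≤ u := fun i ↦ min_le_right _ _
  refine ⟨v, fun i ↦ min_le_left _ _, u - v, fun i ↦ ?_, add_tsub_cancel_of_le hv⟩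
  have := hu i
  simp only [v, Finsupp.tsub_apply, Finsupp.mapRange_apply]
  lia

theorem restrictDegree_eq_pow (σ R : Type*) [CommSemiring R] (m : ℕ) :
    restrictDegree σ R m = restrictDegree σ R 1 ^ m := by
  induction m with
  | zero =>
    rw [pow_zero, ← restrictSupport_zero, restrictDegree]
    congr 1
    ext u
    simp [Finsupp.ext_iff]
  | succ m ih => rw [restrictDegree_add, ih, pow_succ]

theorem iSup_restrictDegree (σ R : Type*) [CommSemiring R] : ⨆ m, restrictDegree σ R m = ⊤ :=
  eq_top_iff.mpr fun p _ ↦ Submodule.mem_iSup_of_mem p.totalDegree <|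
    restrictTotalDegree_le_restrictDegree σ R p.totalDegree
      ((mem_restrictTotalDegree _ _ _).mpr le_rfl)

/-- Exponent vectors bounded by `m` are functions into `Fin (m + 1)`; this makes the index type of
`MvPolynomial.basisRestrictSupport` a `Fintype` whose cardinality `simp` computes. -/
noncomputable def boundedExponentEquiv (σ : Type*) [Finite σ] (m : ℕ) :
    {u : σ →₀ ℕ | ∀ i, u i ≤ m} ≃ (σ → Fin (m + 1)) where
  toFun u i := ⟨u.1 i, Nat.lt_succ_of_le (u.2 i)⟩
  invFun f := ⟨Finsupp.equivFunOnFinite.symm fun i ↦ f i, fun i ↦ Nat.le_of_lt_succ (f i).2⟩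
  left_inv _ := by ext; rfl
  right_inv _ := rfl

/-- The monomial basis of the polynomials of degree at most `m` in each variable. -/
noncomputable def basisRestrictDegree (σ R : Type*) [Finite σ] [CommSemiring R] (m : ℕ) :
    Module.Basis (σ → Fin (m + 1)) R (restrictDegree σ R m) :=
  (basisRestrictSupport R {u : σ →₀ ℕ | ∀ i, u i ≤ m}).reindex (boundedExponentEquiv σ m)

theorem fg_restrictDegree (σ R : Type*) [Finite σ] [CommSemiring R] (m : ℕ) :
    (restrictDegree σ R m).FG :=
  Module.Finite.iff_fg.mp (.of_basis (basisRestrictDegree σ R m))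

theorem finrank_restrictDegree (σ R : Type*) [Fintype σ] [CommRing R] [Nontrivial R] (m : ℕ) :
    Module.finrank R (restrictDegree σ R m) = (m + 1) ^ Fintype.card σ := by
  classical
  simp [Module.finrank_eq_card_basis (basisRestrictDegree σ R m)]

theorem finrank_mul_le {K A : Type*} [Field K] [Ring A] [Algebra K A] (M N : Submodule K A)
    [FiniteDimensional K M] [FiniteDimensional K N] :
    Module.finrank K ↥(M * N) ≤ Module.finrank K M * Module.finrank K N := by
  rw [← Submodule.mulMap_range, ← Module.finrank_tensorProduct]
  exact LinearMap.finrank_range_le _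

theorem exists_fg_range_mul_eq_top {R A B : Type*} [CommRing R] [CommRing A] [CommRing B]
    [Algebra R A] [Algebra R B] (g : A →ₐ[R] B) (hg : g.Finite) :
    ∃ U : Submodule R B, U.FG ∧ 1 ≤ U ∧ g.toLinearMap.range * U = ⊤ := by
  classical
  algebraize [g.toRingHom]
  have : Module.Finite A B := hg
  obtain ⟨s, hs⟩ := Module.Finite.fg_top (R := A) (M := B)
  refine ⟨Submodule.span R (insert 1 s : Finset B), ⟨_, rfl⟩,
    Submodule.one_le.mpr (Submodule.subset_span (by simp)), eq_top_iff.mpr fun x _ ↦ ?_⟩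
  have hx : x ∈ Submodule.span A (s : Set B) := hs ▸ trivial
  induction hx using Submodule.closure_induction with
  | zero => exact zero_mem _
  | add x y _ _ hx hy => exact add_mem (hx trivial) (hy trivial)
  | smul_mem a y hy =>
    rw [Algebra.smul_def]
    exact Submodule.mul_mem_mul ⟨a, rfl⟩ (Submodule.subset_span (by simp [hy]))

section Growth

variable {K B σ : Type*} [Field K] [CommRing B] [Algebra K B] [Fintype σ] {V : Submodule K B}

theorem finiteType_of_iSup_pow_eq_top (hV : V.FG) (htop : ⨆ m, V ^ m = ⊤) :
    Algebra.FiniteType K B := by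
  obtain ⟨s, rfl⟩ := hV
  refine ⟨s, Subalgebra.toSubmodule_injective (eq_top_iff.mpr ?_)⟩
  rw [← htop]
  refine iSup_le fun m ↦ ?_
  rw [Submodule.span_pow, Algebra.adjoin_eq_span]
  exact Submodule.span_mono (Submonoid.pow_subset Submonoid.subset_closure)

theorem exists_pow_le_finrank_pow (g : MvPolynomial σ K →ₐ[K] B) (hg : Function.Injective g)
    (hV : V.FG) (hone : 1 ≤ V) (htop : ⨆ m, V ^ m = ⊤) :
    ∃ c, ∀ m, m ^ Fintype.card σ ≤ Module.finrank K ↥(V ^ (c * m)) := by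
  obtain ⟨c, hc⟩ := exists_le_of_fg_of_iSup_eq_top (fun _ _ h ↦ pow_le_pow_right' hone h) htop
    ((fg_restrictDegree σ K 1).map g.toLinearMap)
  have hle (m : ℕ) : (restrictDegree σ K m).map g.toLinearMap ≤ V ^ (c * m) := by
    rw [restrictDegree_eq_pow, Submodule.map_pow, pow_mul]
    exact pow_le_pow_left' hc m
  refine ⟨c, fun m ↦ ?_⟩
  have : FiniteDimensional K ↥(V ^ (c * m)) := Module.Finite.iff_fg.mpr (hV.pow _)
  calc m ^ Fintype.card σ ≤ (m + 1) ^ Fintype.card σ := by gcongr; lia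
    _ = Module.finrank K ((restrictDegree σ K m).map g.toLinearMap) := by
      rw [← finrank_restrictDegree σ K m]
      exact (Submodule.equivMapOfInjective g.toLinearMap hg _).finrank_eq
    _ ≤ Module.finrank K ↥(V ^ (c * m)) := Submodule.finrank_mono (hle m)

theorem exists_finrank_pow_le (g : MvPolynomial σ K →ₐ[K] B) (hg : g.Finite) (hV : V.FG) :
    ∃ C, ∀ m, Module.finrank K ↥(V ^ m) ≤ C * (m + 1) ^ Fintype.card σ := by
  obtain ⟨U, hU, hone, htop⟩ := exists_fg_range_mul_eq_top g hg
  let F (m : ℕ) : Submodule K B := (restrictDegree σ K m).map g.toLinearMap * U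
  obtain ⟨D, hD⟩ : ∃ D, V * U ≤ F D := by
    refine exists_le_of_fg_of_iSup_eq_top (fun k l hkl ↦ ?_) ?_ (hV.mul hU)
    · refine mul_le_mul_left (Submodule.map_mono (restrictSupport_mono K fun u hu i ↦ ?_)) _
      exact (hu i).trans hkl
    · rw [← Submodule.iSup_mul, ← Submodule.map_iSup, iSup_restrictDegree, Submodule.map_top, htop]
  have hpow (m : ℕ) : V ^ m * U ≤ F (D * m) := by
    induction m with
    | zero => simp [F, restrictDegree_eq_pow σ K 0, Submodule.map_one]
    | succ m ih =>
      calc V ^ (m + 1) * U = V ^ m * (V * U) := by rw [pow_succ, mul_assoc]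
        _ ≤ V ^ m * F D := mul_le_mul_right hD _
        _ = (restrictDegree σ K D).map g.toLinearMap * (V ^ m * U) := mul_left_comm _ _ _
        _ ≤ (restrictDegree σ K D).map g.toLinearMap * F (D * m) := mul_le_mul_right ih _
        _ = F (D * (m + 1)) := by
          rw [← mul_assoc, ← Submodule.map_mul, ← restrictDegree_add, mul_add_one, add_comm]
  refine ⟨(D + 1) ^ Fintype.card σ * Module.finrank K U, fun m ↦ ?_⟩
  have : FiniteDimensional K U := Module.Finite.iff_fg.mpr hU
  have : FiniteDimensional K (restrictDegree σ K (D * m)) :=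
    Module.Finite.iff_fg.mpr (fg_restrictDegree σ K _)
  have : FiniteDimensional K (F (D * m)) :=
    Module.Finite.iff_fg.mpr (((fg_restrictDegree σ K _).map _).mul hU)
  calc Module.finrank K ↥(V ^ m) ≤ Module.finrank K (F (D * m)) :=
      Submodule.finrank_mono ((le_mul_of_one_le_right' hone).trans (hpow m))
    _ ≤ (D * m + 1) ^ Fintype.card σ * Module.finrank K U := by
      rw [← finrank_restrictDegree σ K]
      exact (finrank_mul_le _ _).trans (Nat.mul_le_mul_right _ (Submodule.finrank_map_le _ _))
    _ ≤ ((D + 1) * (m + 1)) ^ Fintype.card σ * Module.finrank K U := by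
      gcongr
      lia
    _ = (D + 1) ^ Fintype.card σ * Module.finrank K U * (m + 1) ^ Fintype.card σ := by
      rw [mul_pow, mul_right_comm]

theorem ringKrullDim_eq_of_finrank_pow {e c C : ℕ} (hV : V.FG) (hone : 1 ≤ V)
    (htop : ⨆ m, V ^ m = ⊤) (hlower : ∀ m, m ^ e ≤ Module.finrank K ↥(V ^ (c * m)))
    (hupper : ∀ m, Module.finrank K ↥(V ^ m) ≤ C * (m + 1) ^ e) :
    ringKrullDim B = e := by
  have : Nontrivial B := by
    by_contra h
    rw [not_nontrivial_iff_subsingleton] at h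
    simpa [Module.finrank_zero_of_subsingleton] using hlower 1
  have : Algebra.FiniteType K B := finiteType_of_iSup_pow_eq_top hV htop
  obtain ⟨d, g, hinj, hfin⟩ := exists_finite_inj_algHom_of_fg K B
  obtain ⟨c', hlower'⟩ := exists_pow_le_finrank_pow g hinj hV hone htop
  obtain ⟨C', hupper'⟩ := exists_finrank_pow_le g hfin hV
  rw [Fintype.card_fin] at hlower' hupper'
  have hd : d = e := le_antisymm (le_of_pow_le_of_le_mul_pow hlower' hupper)
    (le_of_pow_le_of_le_mul_pow hlower hupper')
  algebraize [g.toRingHom]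
  have : Module.Finite (MvPolynomial (Fin d) K) B := hfin
  have : FaithfulSMul (MvPolynomial (Fin d) K) B :=
    (faithfulSMul_iff_algebraMap_injective _ _).mpr hinj
  rw [ringKrullDim_eq_of_isIntegral (MvPolynomial (Fin d) K) B,
    MvPolynomial.ringKrullDim_of_isNoetherianRing, ringKrullDim_eq_zero_of_field, zero_add,
    Nat.card_fin, hd]

end Growth

section Covers

variable {n k l : ℕ} {G : SimpleGraph (Fin n)} {α β : Fin n → ℕ}

theorem isCover_zero (G : SimpleGraph (Fin n)) (α : Fin n → ℕ) : IsCover G 0 α :=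
  fun _ _ _ ↦ Nat.zero_le _

theorem IsCover.add (hα : IsCover G k α) (hβ : IsCover G l β) : IsCover G (k + l) (α + β) :=
  fun i j hij ↦ by simpa only [Pi.add_apply, add_add_add_comm] using add_le_add (hα hij) (hβ hij)

theorem IsCover.mono (hα : IsCover G k α) (h : α ≤ β) : IsCover G k β :=
  fun i j hij ↦ (hα hij).trans (add_le_add (h i) (h j))

theorem IsCover.exists_eq_add (hα : IsCover G (k + 2) α) :
    ∃ β γ, IsCover G k β ∧ IsCover G 2 γ ∧ α = β + γ := by
  let γ : Fin n → ℕ := fun i ↦ if α i = 0 then 0 else if k + 2 ≤ α i then 2 else 1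
  have hγ : γ ≤ α := fun i ↦ by
    simp only [γ]
    split_ifs <;> lia
  refine ⟨α - γ, γ, fun i j hij ↦ ?_, fun i j hij ↦ ?_, (tsub_add_cancel_of_le hγ).symm⟩
  all_goals
    have := hα hij
    simp only [Pi.sub_apply, γ]
    split_ifs <;> lia

theorem IsCover.exists_isBasicCover_le (hα : IsCover G k α) : ∃ β ≤ α, IsBasicCover G k β := by
  obtain ⟨β, hβα, hβ⟩ := exists_minimal_le_of_wellFoundedLT (IsCover G k) α hα
  exact ⟨β, hβα, hβ.prop, fun γ hγβ hγ ↦ hγβ.antisymm (hβ.le_of_le hγ hγβ)⟩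

theorem IsCover.exists_eq_add_single (hα : IsCover G k α) (hbasic : ¬ IsBasicCover G k α) :
    ∃ i β, IsCover G k β ∧ α = β + Pi.single i 1 := by
  obtain ⟨β, hβα, hβ⟩ := hα.exists_isBasicCover_le
  obtain ⟨i, hi⟩ : ∃ i, β i < α i :=
    (Pi.lt_def.mp (hβα.lt_of_ne fun h ↦ hbasic (h ▸ hβ))).2
  have hle : β + Pi.single i 1 ≤ α := by
    intro j
    obtain rfl | hj := eq_or_ne j i
    · simpa using hi
    · simpa [hj] using hβα j
  exact ⟨i, α - Pi.single i 1, hβ.1.mono (le_tsub_of_add_le_right hle),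
    (tsub_add_cancel_of_le (le_of_add_le_right hle)).symm⟩

theorem IsBasicCover.not_isCover_of_lt (hα : IsBasicCover G k α) (h : β < α) : ¬ IsCover G k β :=
  fun hβ ↦ h.ne (hα.2 β h.le hβ)

theorem IsBasicCover.exists_adj_add_eq_of_pos (hα : IsBasicCover G k α) {i : Fin n}
    (hi : 0 < α i) : ∃ j, G.Adj i j ∧ α i + α j = k := by
  by_contra! hslack
  refine hα.not_isCover_of_lt (β := Function.update α i (α i - 1)) (by simpa) fun x y hxy ↦ ?_
  have hcover := hα.1 hxy
  obtain rfl | hx := eq_or_ne x i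
  · have := hslack y hxy
    simp only [Function.update_self, Function.update_of_ne hxy.ne']
    lia
  · obtain rfl | hy := eq_or_ne y i
    · have := hslack x hxy.symm
      simp only [Function.update_self, Function.update_of_ne hx]
      lia
    · simpa [hx, hy] using hcover

/-- The values below `k / 2` that `α` takes at ends of tight edges, i.e. of edges `{i, j}` with
`α i + α j = k`; for a basic `k`-cover these are the only parameters it depends on. -/
noncomputable def lowValues (G : SimpleGraph (Fin n)) (k : ℕ) (α : Fin n → ℕ) : Finset ℕ := by
  classical
  exact (Finset.univ.filter fun i ↦ 2 * α i < k ∧ ∃ j, G.Adj i j ∧ α i + α j = k).image α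

theorem mem_lowValues {w : ℕ} :
    w ∈ lowValues G k α ↔ ∃ i j, G.Adj i j ∧ α i + α j = k ∧ 2 * α i < k ∧ α i = w := by
  simp only [lowValues, Finset.mem_image, Finset.mem_filter, Finset.mem_univ, true_and]
  grind

theorem lt_of_mem_lowValues {w : ℕ} (hw : w ∈ lowValues G k α) : w < k := by
  obtain ⟨i, j, -, -, hi, rfl⟩ := mem_lowValues.mp hw
  lia

theorem IsCover.hasFreeParameterSet_card_lowValues (hα : IsCover G k α) :
    HasFreeParameterSet G (lowValues G k α).card := by
  let f (p : Fin (lowValues G k α).card) : ℕ := (lowValues G k α).orderEmbOfFin rfl p.rev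
  have hf : StrictAnti f := fun p q hpq ↦
    ((lowValues G k α).orderEmbOfFin rfl).strictMono (Fin.rev_lt_rev.mpr hpq)
  choose a b hadj htight hlow ha using fun p : Fin (lowValues G k α).card ↦
    mem_lowValues.mp ((lowValues G k α).orderEmbOfFin_mem rfl p.rev)
  replace ha (p) : α (a p) = f p := ha p
  have hb (p) : α (b p) = k - f p := by
    rw [← ha]
    exact Nat.eq_sub_of_add_eq' (htight p)
  have hfk (p) : 2 * f p < k := ha p ▸ hlow p
  have hedge_a (p q) (h : G.Adj (a p) (a q)) : k ≤ f p + f q := ha p ▸ ha q ▸ hα h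
  have hedge_b (p q) (h : G.Adj (a p) (b q)) : k ≤ f p + (k - f q) := ha p ▸ hb q ▸ hα h
  refine ⟨a, b, fun p q h ↦ hf.injective ?_, fun p q h ↦ hf.injective ?_, fun p q h ↦ ?_,
    fun p q h ↦ ?_, hadj, fun p q h ↦ hf.le_iff_ge.mp ?_⟩ <;>
    have := hfk p <;> have := hfk q
  · rw [← ha, ← ha, h]
  · have : k - f p = k - f q := by rw [← hb, ← hb, h]
    lia
  · have := hedge_a p q h
    lia
  · have : f p = k - f q := by rw [← ha, ← hb, h]
    lia
  · have := hedge_b p q h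
    lia

theorem IsBasicCover.value_cases (hα : IsBasicCover G k α) (i : Fin n) :
    α i = 0 ∨ α i = k / 2 ∨ ∃ w ∈ lowValues G k α, α i = w ∨ α i = k - w := by
  obtain hi | hi := Nat.eq_zero_or_pos (α i)
  · exact .inl hi
  obtain ⟨j, hij, htight⟩ := hα.exists_adj_add_eq_of_pos hi
  obtain hlow | hhalf | hhigh := lt_trichotomy (2 * α i) k
  · exact .inr (.inr ⟨α i, mem_lowValues.mpr ⟨i, j, hij, htight, hlow, rfl⟩, .inl rfl⟩)
  · exact .inr (.inl (by lia))
  · refine .inr (.inr ⟨α j, mem_lowValues.mpr ⟨j, i, hij.symm, ?_, ?_, rfl⟩, .inr ?_⟩) <;> lia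

theorem IsFreeParameterPair.exists_isCover {r : ℕ} {a b : Fin r → Fin n}
    (hab : IsFreeParameterPair G a b) {v : Fin r → ℕ} (hv : Antitone v)
    (hvk : ∀ i, 2 * v i ≤ k) :
    ∃ γ, IsCover G k γ ∧ (∀ i, γ (a i) = v i) ∧ ∀ i, γ (b i) = k - v i := by
  obtain ⟨ha, hb, hindep, hdisj, -, hle⟩ := hab
  let γ : Fin n → ℕ := Function.extend a v (Function.extend b (fun i ↦ k - v i) fun _ ↦ k)
  have hγa (i : Fin r) : γ (a i) = v i := ha.extend_apply _ _ i
  have hγ_off {x : Fin n} (hx : ∀ i, a i ≠ x) :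
      γ x = Function.extend b (fun i ↦ k - v i) (fun _ ↦ k) x :=
    Function.extend_apply' _ _ _ fun ⟨i, hi⟩ ↦ hx i hi
  have hγb (i : Fin r) : γ (b i) = k - v i := by
    rw [hγ_off fun j ↦ hdisj j i, hb.extend_apply]
  have hγ_cases {x : Fin n} (hx : ∀ i, a i ≠ x) : γ x = k ∨ ∃ i, b i = x := by
    rw [hγ_off hx, or_iff_not_imp_right]
    exact Function.extend_apply' _ _ _
  have hcover_a (i : Fin r) {y : Fin n} (hadj : G.Adj (a i) y) : k ≤ γ (a i) + γ y := by
    obtain hy | ⟨j, rfl⟩ := hγ_cases fun j h ↦ hindep i j (h ▸ hadj)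
    · lia
    · have := hv (hle i j hadj)
      have := hvk j
      rw [hγa, hγb]
      lia
  have hhalf {x : Fin n} (hx : ∀ i, a i ≠ x) : k ≤ 2 * γ x := by
    obtain hx | ⟨i, rfl⟩ := hγ_cases hx
    · lia
    · have := hvk i
      rw [hγb]
      lia
  refine ⟨γ, fun x y hxy ↦ ?_, hγa, hγb⟩
  by_cases hx : ∃ i, a i = x
  · obtain ⟨i, rfl⟩ := hx
    exact hcover_a i hxy
  by_cases hy : ∃ i, a i = y
  · obtain ⟨i, rfl⟩ := hy
    exact (hcover_a i hxy.symm).trans_eq (add_comm _ _)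
  have := hhalf (not_exists.mp hx)
  have := hhalf (not_exists.mp hy)
  lia

theorem IsFreeParameterPair.exists_isBasicCover {r : ℕ} {a b : Fin r → Fin n}
    (hab : IsFreeParameterPair G a b) {v : Fin r → ℕ} (hv : Antitone v)
    (hvk : ∀ i, 2 * v i ≤ k) : ∃ β, IsBasicCover G k β ∧ ∀ i, β (a i) = v i := by
  obtain ⟨γ, hγ, hγa, hγb⟩ := hab.exists_isCover hv hvk
  obtain ⟨β, hβγ, hβ⟩ := hγ.exists_isBasicCover_le
  refine ⟨β, hβ, fun i ↦ ?_⟩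
  have hcover : k ≤ β (a i) + β (b i) := hβ.1 (hab.2.2.2.2.1 i)
  have hle_a : β (a i) ≤ v i := hγa i ▸ hβγ (a i)
  have hle_b : β (b i) ≤ k - v i := hγb i ▸ hβγ (b i)
  have := hvk i
  lia

theorem HasFreeParameterSet.le_card {r : ℕ} (h : HasFreeParameterSet G r) : r ≤ n := by
  obtain ⟨a, b, ha, -⟩ := h
  simpa using Fintype.card_le_of_injective a ha

theorem bddAbove_hasFreeParameterSet (G : SimpleGraph (Fin n)) :
    BddAbove {r : ℕ | HasFreeParameterSet G r} := ⟨n, fun _ h ↦ h.le_card⟩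

theorem hasFreeParameterSet_zero (G : SimpleGraph (Fin n)) : HasFreeParameterSet G 0 :=
  ⟨Fin.elim0, Fin.elim0, by simp [IsFreeParameterPair, Function.Injective]⟩

theorem hasFreeParameterSet_sSup (G : SimpleGraph (Fin n)) :
    HasFreeParameterSet G (sSup {r : ℕ | HasFreeParameterSet G r}) :=
  Nat.sSup_mem ⟨0, hasFreeParameterSet_zero G⟩ (bddAbove_hasFreeParameterSet G)

/-- The pairs `(α, k)` of a `k ≤ N` and a basic `k`-cover `α`; they index a basis of the part of
the symbolic fiber cone in `t`-degrees at most `N`. -/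
def basicCovers (G : SimpleGraph (Fin n)) (N : ℕ) : Set ((Fin n → ℕ) × ℕ) :=
  {c | IsBasicCover G c.2 c.1 ∧ c.2 ≤ N}

/-- The pair `(α, k)` where `c = (k, v, τ)` and `τ i` selects `α i` among the values `v p`,
`k - v p`, `k / 2` and `0`. -/
def coverOfCode {g N : ℕ}
    (c : Fin (N + 1) × (Fin g → Fin (N + 1)) × (Fin n → Fin g ⊕ Fin g ⊕ Bool)) :
    (Fin n → ℕ) × ℕ :=
  (fun i ↦ Sum.elim (fun p ↦ (c.2.1 p : ℕ))
    (Sum.elim (fun p ↦ c.1 - c.2.1 p) (Bool.rec 0 (c.1 / 2))) (c.2.2 i), c.1)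

theorem exists_subset_range_of_card_le {ι : Type*} [Nonempty ι] {s : Finset ι} {g : ℕ}
    (hs : s.card ≤ g) : ∃ v : Fin g → ι, (s : Set ι) ⊆ Set.range v := by
  obtain ⟨e⟩ : Nonempty (s ↪ Fin g) := Function.Embedding.nonempty_of_card_le (by simpa)
  exact ⟨Function.extend e Subtype.val fun _ ↦ Classical.arbitrary ι,
    fun x hx ↦ ⟨e ⟨x, hx⟩, e.injective.extend_apply _ _ _⟩⟩

theorem basicCovers_subset_range_coverOfCode {g : ℕ}
    (hg : ∀ r, HasFreeParameterSet G r → r ≤ g) (N : ℕ) :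
    basicCovers G N ⊆ Set.range (coverOfCode (n := n) (g := g) (N := N)) := by
  rintro ⟨α, k⟩ ⟨hα : IsBasicCover G k α, hk : k ≤ N⟩
  obtain ⟨v, hv⟩ : ∃ v : Fin g → Fin (N + 1), ∀ w ∈ lowValues G k α, ∃ p, (v p : ℕ) = w := by
    have hlt (w) (hw : w ∈ lowValues G k α) : w < N + 1 := by
      have := lt_of_mem_lowValues hw
      lia
    have hcard : ((lowValues G k α).attachFin hlt).card ≤ g :=
      (Finset.card_attachFin _ hlt).trans_le (hg _ hα.1.hasFreeParameterSet_card_lowValues)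
    obtain ⟨v, hv⟩ := exists_subset_range_of_card_le hcard
    refine ⟨v, fun w hw ↦ ?_⟩
    obtain ⟨p, hp⟩ := hv ((Finset.mem_attachFin hlt (a := ⟨w, hlt w hw⟩)).mpr hw)
    exact ⟨p, congrArg Fin.val hp⟩
  have hτ (i : Fin n) : ∃ τ : Fin g ⊕ Fin g ⊕ Bool, Sum.elim (fun p ↦ (v p : ℕ))
      (Sum.elim (fun p ↦ k - v p) (Bool.rec 0 (k / 2))) τ = α i := by
    obtain hi | hi | ⟨w, hw, hi⟩ := hα.value_cases i
    · exact ⟨.inr (.inr false), hi.symm⟩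
    · exact ⟨.inr (.inr true), hi.symm⟩
    · obtain ⟨p, rfl⟩ := hv w hw
      exact hi.elim (fun hi ↦ ⟨.inl p, hi.symm⟩) fun hi ↦ ⟨.inr (.inl p), hi.symm⟩
  choose τ hτ using hτ
  exact ⟨(⟨k, Nat.lt_succ_of_le hk⟩, v, τ), Prod.ext (funext hτ) rfl⟩

theorem finite_basicCovers (G : SimpleGraph (Fin n)) (N : ℕ) : (basicCovers G N).Finite :=
  (Set.finite_range _).subset (basicCovers_subset_range_coverOfCode (fun _ hr ↦ hr.le_card) N)

theorem ncard_basicCovers_le {g : ℕ} (hg : ∀ r, HasFreeParameterSet G r → r ≤ g) (N : ℕ) :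
    (basicCovers G N).ncard ≤ (2 * g + 2) ^ n * (N + 1) ^ (g + 1) := by
  calc (basicCovers G N).ncard
      ≤ (Set.range (coverOfCode (n := n) (g := g) (N := N))).ncard :=
        Set.ncard_le_ncard (basicCovers_subset_range_coverOfCode hg N)
    _ ≤ Nat.card (Fin (N + 1) × (Fin g → Fin (N + 1)) × (Fin n → Fin g ⊕ Fin g ⊕ Bool)) := by
        rw [← Set.image_univ, ← Set.ncard_univ]
        exact Set.ncard_image_le
    _ = (2 * g + 2) ^ n * (N + 1) ^ (g + 1) := by
        simp only [Nat.card_eq_fintype_card, Fintype.card_prod, Fintype.card_pi_const,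
          Fintype.card_sum, Fintype.card_fin, Fintype.card_bool]
        ring

theorem HasFreeParameterSet.pow_le_ncard_basicCovers {r : ℕ} (hr : HasFreeParameterSet G r)
    (m : ℕ) : m ^ (r + 1) ≤ (basicCovers G (2 * ((r + 1) * m))).ncard := by
  obtain ⟨a, b, hab⟩ := hr
  let k (c : Fin m × (Fin r → Fin m)) : ℕ := 2 * (r * m) + c.1
  let v (c : Fin m × (Fin r → Fin m)) (i : Fin r) : ℕ := i.rev * m + c.2 i
  have hv (c) : Antitone (v c) := antitone_iff_forall_lt.mpr fun i j hij ↦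
    calc v c j ≤ (j.rev + 1) * m := by grind
      _ ≤ i.rev * m := Nat.mul_le_mul_right m (Fin.rev_lt_rev.mpr hij)
      _ ≤ v c i := Nat.le_add_right _ _
  have hvk (c) (i : Fin r) : 2 * v c i ≤ k c :=
    calc 2 * v c i ≤ 2 * ((i.rev + 1) * m) := by grind
      _ ≤ 2 * (r * m) := by gcongr; exact i.rev.2
      _ ≤ k c := Nat.le_add_right _ _
  choose β hβ hβa using fun c ↦ hab.exists_isBasicCover (hv c) (hvk c)
  have hinj : Function.Injective fun c ↦ (β c, k c) := by
    intro c c' h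
    rw [Prod.mk.injEq] at h
    refine Prod.ext (Fin.ext (Nat.add_left_cancel h.2)) (funext fun i ↦ Fin.ext ?_)
    have hvv : v c i = v c' i := by rw [← hβa, ← hβa, h.1]
    exact Nat.add_left_cancel hvv
  have hrange : Set.range (fun c ↦ (β c, k c)) ⊆ basicCovers G (2 * ((r + 1) * m)) := by
    rintro _ ⟨c, rfl⟩
    exact ⟨hβ c, by grind⟩
  calc m ^ (r + 1) = (Set.range fun c ↦ (β c, k c)).ncard := by
        simp [← Set.image_univ, Set.ncard_image_of_injective _ hinj, Set.ncard_univ, pow_succ']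
    _ ≤ _ := Set.ncard_le_ncard hrange (finite_basicCovers G _)

end Covers

section SymbolicRees

variable (K : Type*) [Field K] {n k l : ℕ} {G : SimpleGraph (Fin n)} {α β : Fin n → ℕ}

/-- The exponent vector of the monomial `x^α t^k`. -/
noncomputable def coverExponent (α : Fin n → ℕ) (k : ℕ) : Option (Fin n) →₀ ℕ :=
  Finsupp.equivFunOnFinite.symm fun o ↦ o.elim k α

@[simp]
theorem coverExponent_none (α : Fin n → ℕ) (k : ℕ) : coverExponent α k none = k := rfl

@[simp]
theorem coverExponent_some (α : Fin n → ℕ) (k : ℕ) (i : Fin n) :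
    coverExponent α k (some i) = α i := rfl

theorem coverExponent_inj : coverExponent α k = coverExponent β l ↔ α = β ∧ k = l :=
  ⟨fun h ↦ ⟨funext fun i ↦ DFunLike.congr_fun h (some i), DFunLike.congr_fun h none⟩,
    fun h ↦ h.1 ▸ h.2 ▸ rfl⟩

theorem coverMonomial_eq_monomial (α : Fin n → ℕ) (k : ℕ) :
    coverMonomial K α k = monomial (coverExponent α k) 1 := rfl

theorem coverMonomial_mul (α β : Fin n → ℕ) (k l : ℕ) :
    coverMonomial K α k * coverMonomial K β l = coverMonomial K (α + β) (k + l) := by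
  simp only [coverMonomial_eq_monomial, monomial_mul, mul_one]
  congr 2
  ext (_ | i) <;> simp

theorem coverMonomial_zero : coverMonomial K (0 : Fin n → ℕ) 0 = 1 := by
  rw [coverMonomial_eq_monomial, ← C_1, C_apply]
  congr 2
  ext (_ | _) <;> simp

theorem coverMonomial_single (i : Fin n) : coverMonomial K (Pi.single i 1) 0 = X (some i) := by
  classical
  rw [coverMonomial_eq_monomial, X]
  congr 2
  ext (_ | j)
  · simp
  · simp [Pi.single_apply, Finsupp.single_apply, eq_comm]

theorem coverMonomial_mem (h : IsCover G k α) : coverMonomial K α k ∈ symbolicRees K G :=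
  Algebra.subset_adjoin ⟨k, α, h, rfl⟩

/-- The monomials of the symbolic Rees algebra. -/
def coverMonomials (G : SimpleGraph (Fin n)) : Submonoid (St K n) where
  carrier := {p | ∃ k : ℕ, ∃ α : Fin n → ℕ, IsCover G k α ∧ p = coverMonomial K α k}
  one_mem' := ⟨0, 0, isCover_zero G 0, (coverMonomial_zero K).symm⟩
  mul_mem' := by
    rintro _ _ ⟨k, α, hα, rfl⟩ ⟨l, β, hβ, rfl⟩
    exact ⟨k + l, α + β, hα.add hβ, coverMonomial_mul K α β k l⟩

theorem toSubmodule_symbolicRees (G : SimpleGraph (Fin n)) :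
    Subalgebra.toSubmodule (symbolicRees K G) = Submodule.span K (coverMonomials K G) := by
  conv_rhs => rw [← Submonoid.closure_eq (coverMonomials K G)]
  exact Algebra.adjoin_eq_span K _

variable {K}

theorem isCover_of_coeff_ne_zero {p : St K n} (hp : p ∈ symbolicRees K G)
    {u : Option (Fin n) →₀ ℕ} (hu : coeff u p ≠ 0) : IsCover G (u none) fun i ↦ u (some i) := by
  have hle : Submodule.span K (coverMonomials K G) ≤
      restrictSupport K {u | IsCover G (u none) fun i ↦ u (some i)} := by
    refine Submodule.span_le.mpr ?_
    rintro _ ⟨k, α, hα, rfl⟩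
    exact (monomial_mem_restrictSupport K).mpr (.inl hα)
  rw [← toSubmodule_symbolicRees] at hle
  exact (mem_restrictSupport_iff K).mp (hle hp) (mem_support_iff.mpr hu)

theorem coeff_mul_X_eq_zero (hα : IsBasicCover G k α) {p : St K n} (hp : p ∈ symbolicRees K G)
    (i : Fin n) : coeff (coverExponent α k) (p * X (some i)) = 0 := by
  classical
  rw [coeff_mul_X', ite_eq_right_iff]
  intro hi
  have hαi : α i ≠ 0 := Finsupp.mem_support_iff.mp hi
  have hsub : coverExponent α k - Finsupp.single (some i) 1 =
      coverExponent (α - Pi.single i 1) k := by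
    ext (_ | j)
    · simp
    · simp [Pi.single_apply, Finsupp.single_apply, eq_comm]
  have hlt : α - Pi.single i 1 < α :=
    Pi.lt_def.mpr ⟨tsub_le_self, i, by simpa using Nat.pos_of_ne_zero hαi⟩
  by_contra hne
  exact hα.not_isCover_of_lt hlt (isCover_of_coeff_ne_zero hp (hsub ▸ hne))

theorem coeff_eq_zero_of_mem_irrelevantIdeal (hα : IsBasicCover G k α) {p : symbolicRees K G}
    (hp : p ∈ irrelevantIdeal K G) : coeff (coverExponent α k) (p : St K n) = 0 := by
  induction hp using Submodule.closure_induction with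
  | zero => exact coeff_zero _
  | add p q _ _ hp hq => rw [Subalgebra.coe_add, coeff_add, hp, hq, add_zero]
  | smul_mem q p hp =>
    obtain ⟨i, hi⟩ := hp
    rw [smul_eq_mul, Subalgebra.coe_mul, hi]
    exact coeff_mul_X_eq_zero hα q.2 i

end SymbolicRees

section FiberCone

variable (K : Type*) [Field K] {n k l : ℕ} (G : SimpleGraph (Fin n)) {α β : Fin n → ℕ}

noncomputable instance : Algebra K (symbolicFiberCone K G) :=
  inferInstanceAs (Algebra K (symbolicRees K G ⧸ irrelevantIdeal K G))

/-- The projection from the symbolic Rees algebra to the symbolic fiber cone. -/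
noncomputable def fiberMk : symbolicRees K G →ₐ[K] symbolicFiberCone K G :=
  Ideal.Quotient.mkₐ K (irrelevantIdeal K G)

theorem fiberMk_surjective : Function.Surjective (fiberMk K G) :=
  Ideal.Quotient.mk_surjective

variable {G}

/-- The coefficient of `x^α t^k` for a basic `k`-cover `α`, as a functional on the symbolic fiber
cone. -/
noncomputable def fiberCoeff (hα : IsBasicCover G k α) : symbolicFiberCone K G →ₗ[K] K :=
  ((irrelevantIdeal K G).restrictScalars K).liftQ
    (lcoeff K (coverExponent α k) ∘ₗ (symbolicRees K G).val.toLinearMap)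
    fun _ hp ↦ coeff_eq_zero_of_mem_irrelevantIdeal hα hp

/-- The class of `x^α t^k` in the symbolic fiber cone. -/
noncomputable def fiberMonomial (hα : IsCover G k α) : symbolicFiberCone K G :=
  fiberMk K G ⟨coverMonomial K α k, coverMonomial_mem K hα⟩

theorem fiberMonomial_mul (hα : IsCover G k α) (hβ : IsCover G l β) :
    fiberMonomial K hα * fiberMonomial K hβ = fiberMonomial K (hα.add hβ) := by
  rw [fiberMonomial, fiberMonomial, ← map_mul]
  exact congrArg (fiberMk K G) (Subtype.ext (coverMonomial_mul K α β k l))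

variable {K}

theorem fiberMk_eq_zero {p : symbolicRees K G} (hp : p ∈ irrelevantIdeal K G) :
    fiberMk K G p = 0 :=
  Ideal.Quotient.eq_zero_iff_mem.mpr hp

theorem fiberMonomial_eq_zero (hα : IsCover G k α) (hbasic : ¬ IsBasicCover G k α) :
    fiberMonomial K hα = 0 := by
  obtain ⟨i, β, hβ, rfl⟩ := hα.exists_eq_add_single hbasic
  have hsingle : fiberMonomial K (isCover_zero G (Pi.single i 1)) = 0 :=
    fiberMk_eq_zero (Ideal.subset_span ⟨i, coverMonomial_single K i⟩)
  have hmul := fiberMonomial_mul K hβ (isCover_zero G (Pi.single i 1))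
  rw [hsingle, mul_zero] at hmul
  exact hmul.symm

theorem fiberCoeff_fiberMk (hα : IsBasicCover G k α) (p : symbolicRees K G) :
    fiberCoeff K hα (fiberMk K G p) = coeff (coverExponent α k) (p : St K n) := rfl

theorem fiberCoeff_fiberMonomial_self (hα : IsBasicCover G k α) :
    fiberCoeff K hα (fiberMonomial K hα.1) = 1 :=
  (fiberCoeff_fiberMk hα _).trans ((coeff_monomial _ _ _).trans (if_pos rfl))

theorem fiberCoeff_fiberMonomial_of_ne (hα : IsBasicCover G k α) (hβ : IsCover G l β)
    (h : (α, k) ≠ (β, l)) : fiberCoeff K hα (fiberMonomial K hβ) = 0 := by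
  classical
  refine (fiberCoeff_fiberMk hα _).trans ((coeff_monomial _ _ _).trans (if_neg fun heq ↦ h ?_))
  obtain ⟨rfl, rfl⟩ := coverExponent_inj.mp heq
  rfl

-- Unfolding this instance reaches instances on the bare quotient, and since `symbolicFiberCone` is
-- not reducible the search for `Module K (symbolicFiberCone K G)` then fails.
attribute [local irreducible] instCommRingSymbolicFiberCone

variable (K G)

theorem fiberMonomial_zero : fiberMonomial K (isCover_zero G 0) = 1 := by
  rw [← map_one (fiberMk K G)]
  exact congrArg (fiberMk K G) (Subtype.ext (coverMonomial_zero K))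

theorem linearIndependent_fiberMonomial (N : ℕ) :
    LinearIndependent K fun c : basicCovers G N ↦ fiberMonomial K c.2.1.1 :=
  .of_pairwise_dual_eq_zero_one _ (fun c ↦ fiberCoeff K c.2.1)
    (fun c d hcd ↦ fiberCoeff_fiberMonomial_of_ne c.2.1 d.2.1.1 (Subtype.coe_injective.ne hcd))
    fun c ↦ fiberCoeff_fiberMonomial_self c.2.1

/-- The part of the symbolic fiber cone in `t`-degrees at most `N`. -/
noncomputable def fiberFiltration (N : ℕ) : Submodule K (symbolicFiberCone K G) :=
  Submodule.span K {x | ∃ k ≤ N, ∃ α, ∃ hα : IsCover G k α, fiberMonomial K hα = x}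

variable {K G} in
theorem fiberMonomial_mem_fiberFiltration {N : ℕ} (hα : IsCover G k α) (hk : k ≤ N) :
    fiberMonomial K hα ∈ fiberFiltration K G N :=
  Submodule.subset_span ⟨k, hk, α, hα, rfl⟩

theorem fiberFiltration_mono : Monotone (fiberFiltration K G) := fun _ _ hMN ↦
  Submodule.span_mono fun _ ⟨k, hk, h⟩ ↦ ⟨k, hk.trans hMN, h⟩

theorem fiberFiltration_eq_span_basicCovers (N : ℕ) :
    fiberFiltration K G N =
      Submodule.span K (Set.range fun c : basicCovers G N ↦ fiberMonomial K c.2.1.1) := by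
  refine le_antisymm (Submodule.span_le.mpr ?_) (Submodule.span_le.mpr ?_)
  · rintro _ ⟨k, hk, α, hα, rfl⟩
    by_cases hbasic : IsBasicCover G k α
    · exact Submodule.subset_span ⟨⟨(α, k), hbasic, hk⟩, rfl⟩
    · rw [fiberMonomial_eq_zero hα hbasic]
      exact zero_mem _
  · rintro _ ⟨c, rfl⟩
    exact fiberMonomial_mem_fiberFiltration _ c.2.2

theorem fg_fiberFiltration (N : ℕ) : (fiberFiltration K G N).FG := by
  have := (finite_basicCovers G N).to_subtype
  exact fiberFiltration_eq_span_basicCovers K G N ▸ Submodule.fg_span (Set.finite_range _)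

theorem finrank_fiberFiltration (N : ℕ) :
    Module.finrank K (fiberFiltration K G N) = (basicCovers G N).ncard := by
  have := (finite_basicCovers G N).fintype
  rw [fiberFiltration_eq_span_basicCovers,
    finrank_span_eq_card (linearIndependent_fiberMonomial K G N), ← Nat.card_coe_set_eq,
    Nat.card_eq_fintype_card]

theorem fiberFiltration_zero : fiberFiltration K G 0 = 1 := by
  refine le_antisymm ?_ (Submodule.one_le.mpr ?_)
  · rw [fiberFiltration_eq_span_basicCovers, Submodule.span_le]
    rintro _ ⟨⟨⟨α, k⟩, hα : IsBasicCover G k α, hk : k ≤ 0⟩, rfl⟩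
    obtain rfl : k = 0 := Nat.le_zero.mp hk
    obtain rfl : 0 = α := hα.2 0 (fun _ ↦ Nat.zero_le _) (isCover_zero G 0)
    change fiberMonomial K (isCover_zero G 0) ∈ (1 : Submodule K (symbolicFiberCone K G))
    rw [fiberMonomial_zero]
    exact Submodule.one_le.mp le_rfl
  · exact fiberMonomial_zero K G ▸ fiberMonomial_mem_fiberFiltration _ le_rfl

theorem fiberFiltration_mul_le (M N : ℕ) :
    fiberFiltration K G M * fiberFiltration K G N ≤ fiberFiltration K G (M + N) := by
  rw [fiberFiltration, fiberFiltration, Submodule.span_mul_span, Submodule.span_le]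
  rintro _ ⟨_, ⟨k, hk, α, hα, rfl⟩, _, ⟨l, hl, β, hβ, rfl⟩, rfl⟩
  change fiberMonomial K hα * fiberMonomial K hβ ∈ fiberFiltration K G (M + N)
  rw [fiberMonomial_mul]
  exact fiberMonomial_mem_fiberFiltration (hα.add hβ) (add_le_add hk hl)

theorem one_le_fiberFiltration (N : ℕ) : 1 ≤ fiberFiltration K G N :=
  fiberFiltration_zero K G ▸ fiberFiltration_mono K G N.zero_le

theorem fiberFiltration_add_two (N : ℕ) :
    fiberFiltration K G (N + 2) = fiberFiltration K G N * fiberFiltration K G 2 := by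
  refine le_antisymm (Submodule.span_le.mpr ?_) (fiberFiltration_mul_le K G N 2)
  rintro _ ⟨k, hk, α, hα, rfl⟩
  by_cases hk2 : k ≤ 2
  · exact le_mul_of_one_le_left' (one_le_fiberFiltration K G N)
      (fiberMonomial_mem_fiberFiltration hα hk2)
  · obtain ⟨l, rfl⟩ : ∃ l, k = l + 2 := Nat.exists_eq_add_of_le' (by lia)
    obtain ⟨β, γ, hβ, hγ, rfl⟩ := hα.exists_eq_add
    rw [SetLike.mem_coe, ← fiberMonomial_mul K hβ hγ]
    exact Submodule.mul_mem_mul (fiberMonomial_mem_fiberFiltration hβ (by lia))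
      (fiberMonomial_mem_fiberFiltration hγ le_rfl)

theorem fiberFiltration_two_mul (m : ℕ) :
    fiberFiltration K G (2 * m) = fiberFiltration K G 2 ^ m := by
  induction m with
  | zero => rw [mul_zero, fiberFiltration_zero, pow_zero]
  | succ m ih => rw [mul_add_one, fiberFiltration_add_two, ih, pow_succ]

theorem iSup_fiberFiltration : ⨆ N, fiberFiltration K G N = ⊤ := by
  refine eq_top_iff.mpr fun x _ ↦ ?_
  obtain ⟨p, rfl⟩ := fiberMk_surjective K G x
  have hle : Subalgebra.toSubmodule (symbolicRees K G) ≤ ((⨆ N, fiberFiltration K G N).comap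
      (fiberMk K G).toLinearMap).map (symbolicRees K G).val.toLinearMap := by
    rw [toSubmodule_symbolicRees, Submodule.span_le]
    rintro _ ⟨k, α, hα, rfl⟩
    exact ⟨⟨_, coverMonomial_mem K hα⟩,
      Submodule.mem_iSup_of_mem k (fiberMonomial_mem_fiberFiltration hα le_rfl), rfl⟩
  obtain ⟨q, hq, hqp⟩ := hle p.2
  exact Subtype.ext hqp ▸ hq

theorem iSup_fiberFiltration_two_pow : ⨆ m, fiberFiltration K G 2 ^ m = ⊤ := by
  refine eq_top_iff.mpr ((iSup_fiberFiltration K G).ge.trans (iSup_le fun N ↦ ?_))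
  refine le_iSup_of_le N ?_
  rw [← fiberFiltration_two_mul]
  exact fiberFiltration_mono K G (Nat.le_mul_of_pos_left N two_pos)

end FiberCone

theorem krullDim_symbolicFiberCone_general (K : Type*) [Field K] {n : ℕ}
    (G : SimpleGraph (Fin n)) :
    ringKrullDim (symbolicFiberCone K G) = (gdim G : WithBot (WithTop ℕ)) := by
  set g := sSup {r : ℕ | HasFreeParameterSet G r}
  refine ringKrullDim_eq_of_finrank_pow (e := g + 1) (c := g + 1)
    (C := (2 * g + 2) ^ n * 2 ^ (g + 1)) (fg_fiberFiltration K G 2) (one_le_fiberFiltration K G 2)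
    (iSup_fiberFiltration_two_pow K G) (fun m ↦ ?_) (fun m ↦ ?_) <;>
    rw [← fiberFiltration_two_mul, finrank_fiberFiltration]
  · exact (hasFreeParameterSet_sSup G).pow_le_ncard_basicCovers m
  · calc (basicCovers G (2 * m)).ncard
        ≤ (2 * g + 2) ^ n * (2 * m + 1) ^ (g + 1) :=
          ncard_basicCovers_le (fun _ hr ↦ le_csSup (bddAbove_hasFreeParameterSet G) hr) _
      _ ≤ (2 * g + 2) ^ n * (2 * (m + 1)) ^ (g + 1) := by gcongr; lia
      _ = (2 * g + 2) ^ n * 2 ^ (g + 1) * (m + 1) ^ (g + 1) := by rw [mul_pow, mul_assoc]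

/-- For a connected graph `G` and a field `K`, the Krull dimension of the
symbolic fiber cone `Ā(G)` of the cover ideal `J(G)` equals the graphical dimension of `G`. -/
theorem krullDim_symbolicFiberCone (K : Type*) [Field K] {n : ℕ}
    (G : SimpleGraph (Fin n)) (hconn : G.Connected)
    (hiso : ∀ v : Fin n, ∃ w, G.Adj v w) :
    ringKrullDim (symbolicFiberCone K G) = (gdim G : WithBot (WithTop ℕ)) :=
  krullDim_symbolicFiberCone_general K G
end

section
/- Let G be a connected graph. There exists a polynomial P∈ℚ[t] of degree gdim(G)−1 such that for all sufficiently large natural numbers h, P(h) equals the number of basic 2h-covers of G. -/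
/-!
Shift a basic `2h`-cover by `-h` and call the result balanced: adjacent values have nonnegative sum,
and every non-isolated vertex lies on an edge with sum zero. These conditions only compare values
with negatives of values, so they survive every odd strictly increasing relabelling of the values.
Hence the number of balanced functions whose set of nonzero absolute values is `S` depends only on
the cardinality `m` of `S`; calling it `c m`, the number of basic `2h`-covers is
`∑ m, h.choose m * c m`.

It remains to see that `c m ≠ 0` exactly when there is a free parameter set of size `m`. If the
nonzero absolute values are `1, …, m`, then edges with values `-i` and `i` give a free parameter set
and its partner set. Conversely, for a free parameter set `a`, let `p v` be the largest index,
counted from `1`, of a parameter adjacent to `v`, or `0` if there is none; subtracting from `p v`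
the minimum of `p` over the neighbours of `v` gives a balanced function with nonzero absolute values
`1, …, m`.
-/

open Finset

namespace IsBasicCover

variable {n k : ℕ} {G : SimpleGraph (Fin n)} {α : Fin n → ℕ}

theorem exists_adj_add_eq_of_ne_zero (hα : IsBasicCover G k α) {v : Fin n} (hv : α v ≠ 0) :
    ∃ w, G.Adj v w ∧ α v + α w = k := by
  -- Otherwise `α v` could be lowered by one.
  by_contra! hne
  have hlt : ∀ w, G.Adj v w → k < α v + α w := fun w hvw =>
    (hα.1 hvw).lt_of_ne (hne w hvw).symm
  have hcover : IsCover G k (Function.update α v (α v - 1)) := by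
    intro i j hij
    have hle := hα.1 hij
    rcases eq_or_ne i v with rfl | hi
    · have := hlt j hij
      rw [Function.update_self, Function.update_of_ne hij.ne']
      omega
    · rcases eq_or_ne j v with rfl | hj
      · have := hlt i hij.symm
        rw [Function.update_self, Function.update_of_ne hi]
        omega
      · rwa [Function.update_of_ne hi, Function.update_of_ne hj]
  have heq := congrFun (hα.2 _ (update_le_self_iff.2 (Nat.sub_le _ _)) hcover) v
  rw [Function.update_self] at heq
  omega

theorem apply_le_s5 (hα : IsBasicCover G k α) (v : Fin n) : α v ≤ k := by
  by_cases hv : α v = 0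
  · omega
  · obtain ⟨w, -, hw⟩ := hα.exists_adj_add_eq_of_ne_zero hv
    omega

theorem exists_adj_add_eq_s5 (hα : IsBasicCover G k α) {v : Fin n} (hv : v ∈ G.support) :
    ∃ w, G.Adj v w ∧ α v + α w = k := by
  by_cases h0 : α v = 0
  · obtain ⟨w, hvw⟩ := hv
    have := hα.1 hvw
    have := hα.apply_le_s5 w
    exact ⟨w, hvw, by omega⟩
  · exact hα.exists_adj_add_eq_of_ne_zero h0

theorem eq_zero_of_notMem_support (hα : IsBasicCover G k α) {v : Fin n} (hv : v ∉ G.support) :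
    α v = 0 := by
  by_contra h0
  obtain ⟨w, hvw, -⟩ := hα.exists_adj_add_eq_of_ne_zero h0
  exact hv ⟨w, hvw⟩

end IsBasicCover

theorem isBasicCover_iff {n k : ℕ} {G : SimpleGraph (Fin n)} {α : Fin n → ℕ} :
    IsBasicCover G k α ↔ IsCover G k α ∧
      (∀ v ∈ G.support, ∃ w, G.Adj v w ∧ α v + α w = k) ∧ ∀ v ∉ G.support, α v = 0 := by
  refine ⟨fun hα => ⟨hα.1, fun _ => hα.exists_adj_add_eq_s5, fun _ => hα.eq_zero_of_notMem_support⟩,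
    fun ⟨hcover, htight, hzero⟩ => ⟨hcover, fun β hle hβ => funext fun v => ?_⟩⟩
  have hv : β v ≤ α v := hle v
  by_cases hsupp : v ∈ G.support
  · obtain ⟨w, hvw, hk⟩ := htight v hsupp
    have := hβ hvw
    have : β w ≤ α w := hle w
    omega
  · have := hzero v hsupp
    omega

/-- A basic `2h`-cover shifted by `-h` on the non-isolated vertices: adjacent values have
nonnegative sum, each non-isolated vertex lies on an edge whose values sum to zero, and isolated
vertices have value zero. The number `h` no longer occurs in these conditions. -/
structure IsBalanced {V : Type*} (G : SimpleGraph V) (x : V → ℤ) : Prop where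
  add_nonneg : ∀ ⦃v w⦄, G.Adj v w → 0 ≤ x v + x w
  exists_adj_add_eq_zero : ∀ v ∈ G.support, ∃ w, G.Adj v w ∧ x v + x w = 0
  eq_zero : ∀ v ∉ G.support, x v = 0

/-- The set of nonzero absolute values taken by `x`. -/
def absValues {V : Type*} [Fintype V] (x : V → ℤ) : Finset ℕ :=
  (univ.image fun v => (x v).natAbs).erase 0

/-- The balanced functions whose set of nonzero absolute values is exactly `S`. -/
def balancedWithAbsValues {V : Type*} [Fintype V] (G : SimpleGraph V) (S : Finset ℕ) :
    Set (V → ℤ) :=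
  {x | IsBalanced G x ∧ absValues x = S}

/-- The bijection from basic `2h`-covers to balanced functions: subtract `h` on the non-isolated
vertices. Isolated vertices, where a basic cover vanishes, keep the value `0`. -/
noncomputable def recenter {V : Type*} (G : SimpleGraph V) (h : ℕ) (α : V → ℕ) : V → ℤ :=
  G.support.indicator fun v => (α v : ℤ) - h

section AbsValues

variable {V : Type*} [Fintype V] {x : V → ℤ}

theorem mem_absValues {k : ℕ} : k ∈ absValues x ↔ k ≠ 0 ∧ ∃ v, (x v).natAbs = k := by
  simp [absValues]

theorem absValues_subset_Icc_iff {h : ℕ} :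
    absValues x ⊆ Icc 1 h ↔ ∀ v, (x v).natAbs ≤ h := by
  simp only [subset_iff, mem_absValues, mem_Icc]
  refine ⟨fun hx v => ?_, ?_⟩
  · by_cases hv : (x v).natAbs = 0
    · omega
    · exact (hx ⟨hv, v, rfl⟩).2
  · rintro hx _ ⟨hk, v, rfl⟩
    exact ⟨Nat.one_le_iff_ne_zero.2 hk, hx v⟩

theorem finite_setOf_absValues_eq (S : Finset ℕ) : {x : V → ℤ | absValues x = S}.Finite := by
  refine (Set.Finite.pi' fun _ : V => Set.finite_Icc (-(S.sup id : ℕ) : ℤ) (S.sup id : ℕ)).subset ?_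
  rintro x rfl v
  by_cases hv : (x v).natAbs = 0
  · rw [Set.mem_Icc]
    omega
  · have : (x v).natAbs ≤ (absValues x).sup id :=
      le_sup (f := id) (mem_absValues.2 ⟨hv, v, rfl⟩)
    rw [Set.mem_Icc]
    omega

theorem finite_balancedWithAbsValues (G : SimpleGraph V) (S : Finset ℕ) :
    (balancedWithAbsValues G S).Finite :=
  (finite_setOf_absValues_eq S).subset fun _ hx => hx.2

theorem ncard_isBalanced_absValues_subset (G : SimpleGraph V) (T : Finset ℕ) :
    {x | IsBalanced G x ∧ absValues x ⊆ T}.ncard =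
      ∑ S ∈ T.powerset, (balancedWithAbsValues G S).ncard := by
  have hunion : {x | IsBalanced G x ∧ absValues x ⊆ T} =
      ⋃ S ∈ (T.powerset : Set (Finset ℕ)), balancedWithAbsValues G S := by
    ext x
    simp [balancedWithAbsValues, and_comm]
  have hdisj : (T.powerset : Set (Finset ℕ)).PairwiseDisjoint (balancedWithAbsValues G) :=
    fun S _ S' _ hne => Set.disjoint_left.2 fun x hS hS' => hne (hS.2.symm.trans hS'.2)
  rw [hunion, T.powerset.finite_toSet.ncard_biUnion
    (fun S _ => finite_balancedWithAbsValues G S) hdisj, finsum_mem_coe_finset]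

end AbsValues

section Recenter

variable {V : Type*} {G : SimpleGraph V} {h : ℕ} {α : V → ℕ} {v w : V}

theorem recenter_of_mem_support (hv : v ∈ G.support) :
    recenter G h α v = α v - h :=
  Set.indicator_of_mem hv _

theorem recenter_of_notMem_support (hv : v ∉ G.support) : recenter G h α v = 0 :=
  Set.indicator_of_notMem hv _

theorem recenter_add_recenter (hvw : G.Adj v w) :
    recenter G h α v + recenter G h α w = ((α v + α w : ℕ) : ℤ) - (2 * h : ℕ) := by
  rw [recenter_of_mem_support hvw.mem_support_left, recenter_of_mem_support hvw.mem_support_right]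
  push_cast
  ring

end Recenter

section BasicCover

variable {n : ℕ} {G : SimpleGraph (Fin n)} {h : ℕ} {α : Fin n → ℕ}

theorem isBalanced_recenter_iff :
    IsBalanced G (recenter G h α) ↔ IsCover G (2 * h) α ∧
      ∀ v ∈ G.support, ∃ w, G.Adj v w ∧ α v + α w = 2 * h := by
  have hle : ∀ ⦃v w⦄, G.Adj v w →
      (0 ≤ recenter G h α v + recenter G h α w ↔ 2 * h ≤ α v + α w) := fun v w hvw => by
    rw [recenter_add_recenter hvw, sub_nonneg, Nat.cast_le]
  have heq : ∀ ⦃v w⦄, G.Adj v w →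
      (recenter G h α v + recenter G h α w = 0 ↔ α v + α w = 2 * h) := fun v w hvw => by
    rw [recenter_add_recenter hvw, sub_eq_zero, Nat.cast_inj]
  constructor
  · refine fun hx => ⟨fun v w hvw => (hle hvw).1 (hx.add_nonneg hvw), fun v hv => ?_⟩
    obtain ⟨w, hvw, hw⟩ := hx.exists_adj_add_eq_zero v hv
    exact ⟨w, hvw, (heq hvw).1 hw⟩
  · refine fun ⟨hcover, htight⟩ => ⟨fun v w hvw => (hle hvw).2 (hcover hvw), fun v hv => ?_,
      fun v => recenter_of_notMem_support⟩
    obtain ⟨w, hvw, hw⟩ := htight v hv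
    exact ⟨w, hvw, (heq hvw).2 hw⟩

theorem IsBasicCover.natAbs_recenter_le (hα : IsBasicCover G (2 * h) α) (v : Fin n) :
    (recenter G h α v).natAbs ≤ h := by
  by_cases hv : v ∈ G.support
  · have := hα.apply_le_s5 v
    rw [recenter_of_mem_support hv]
    omega
  · simp [recenter_of_notMem_support hv]

theorem IsBalanced.exists_recenter_eq {x : Fin n → ℤ} (hx : IsBalanced G x)
    (hle : ∀ v, (x v).natAbs ≤ h) : ∃ α, IsBasicCover G (2 * h) α ∧ recenter G h α = x := by
  obtain ⟨α, hα⟩ : ∃ α : Fin n → ℕ, α = G.support.indicator fun v => (x v + h).toNat := ⟨_, rfl⟩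
  have hαx : recenter G h α = x := by
    funext v
    by_cases hv : v ∈ G.support
    · have := hle v
      rw [recenter_of_mem_support hv, hα, Set.indicator_of_mem hv]
      omega
    · rw [recenter_of_notMem_support hv, hx.eq_zero v hv]
  obtain ⟨hcover, htight⟩ := isBalanced_recenter_iff.1 (hαx ▸ hx)
  exact ⟨α, isBasicCover_iff.2
    ⟨hcover, htight, fun v hv => by rw [hα, Set.indicator_of_notMem hv]⟩, hαx⟩

theorem injOn_recenter (G : SimpleGraph (Fin n)) (h : ℕ) :
    Set.InjOn (recenter G h) {α | IsBasicCover G (2 * h) α} := by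
  intro α hα β hβ hαβ
  funext v
  by_cases hv : v ∈ G.support
  · have := congrFun hαβ v
    rw [recenter_of_mem_support hv, recenter_of_mem_support hv] at this
    omega
  · rw [hα.eq_zero_of_notMem_support hv, hβ.eq_zero_of_notMem_support hv]

theorem image_recenter (G : SimpleGraph (Fin n)) (h : ℕ) :
    recenter G h '' {α | IsBasicCover G (2 * h) α} =
      {x | IsBalanced G x ∧ absValues x ⊆ Icc 1 h} := by
  ext x
  constructor
  · rintro ⟨α, hα, rfl⟩
    exact ⟨isBalanced_recenter_iff.2 ⟨hα.1, fun _ => hα.exists_adj_add_eq_s5⟩,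
      absValues_subset_Icc_iff.2 hα.natAbs_recenter_le⟩
  · rintro ⟨hx, hval⟩
    exact hx.exists_recenter_eq (absValues_subset_Icc_iff.1 hval)

end BasicCover

theorem exists_strictMono_image_range_card_eq (S : Finset ℕ) :
    ∃ f : ℕ → ℕ, StrictMono f ∧ (range #S).image f = S := by
  classical
  obtain ⟨N, hN⟩ := S.exists_nat_subset_range
  let p : ℕ → Prop := fun k => k ∈ S ∨ N ≤ k
  have hp : {k | p k}.Infinite := (Set.Ici_infinite N).mono fun k hk => Or.inr hk
  have hcount : Nat.count p N = #S := by
    rw [Nat.count_eq_card_filter_range]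
    congr 1
    ext k
    have := fun hk : k ∈ S => mem_range.1 (hN hk)
    simp only [mem_filter, mem_range, p]
    grind
  refine ⟨Nat.nth p, Nat.nth_strictMono hp, eq_of_subset_of_card_le ?_ ?_⟩
  · intro j hj
    obtain ⟨i, hi, rfl⟩ := mem_image.1 hj
    have hlt : Nat.nth p i < N := Nat.nth_lt_of_lt_count (hcount ▸ mem_range.1 hi)
    exact (Nat.nth_mem_of_infinite hp i).resolve_right hlt.not_ge
  · rw [card_image_of_injective _ (Nat.nth_injective hp), card_range]

theorem exists_strictMono_image_Icc_one_card_eq {S : Finset ℕ} (h0 : 0 ∉ S) :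
    ∃ f : ℕ → ℕ, StrictMono f ∧ (Icc 1 #S).image f = S := by
  obtain ⟨f, hf, himage⟩ := exists_strictMono_image_range_card_eq (insert 0 S)
  rw [card_insert_of_notMem h0] at himage
  have hf0 : f 0 = 0 := by
    obtain ⟨k, -, hk⟩ := mem_image.1 (himage ▸ mem_insert_self 0 S)
    exact Nat.le_zero.1 ((hf.monotone k.zero_le).trans_eq hk)
  have hIcc : Icc 1 #S = (range (#S + 1)).erase 0 := by
    ext k
    simp only [mem_Icc, mem_erase, mem_range]
    omega
  refine ⟨f, hf, ?_⟩
  rw [hIcc, image_erase hf.injective, himage, hf0, erase_insert h0]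

/-- The odd function on `ℤ` that agrees with `f` on the positive integers; its value at `0` is `0`,
whatever `f 0` is. -/
def oddExtension (f : ℕ → ℕ) (z : ℤ) : ℤ :=
  z.sign * f z.natAbs

section OddExtension

variable {f : ℕ → ℕ}

theorem odd_oddExtension (f : ℕ → ℕ) : Function.Odd (oddExtension f) := fun z => by
  simp [oddExtension]

theorem oddExtension_strictMono (hf : StrictMono f) : StrictMono (oddExtension f) := by
  refine strictMono_of_odd_strictMonoOn_nonneg (odd_oddExtension f) fun y hy z _ hyz => ?_
  have hz : 0 < z := lt_of_le_of_lt hy hyz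
  have hlt : f y.natAbs < f z.natAbs := hf (Int.natAbs_lt_natAbs_of_nonneg_of_lt hy hyz)
  rcases (show (0 : ℤ) ≤ y from hy).eq_or_lt with rfl | hy'
  · simp only [oddExtension, Int.sign_zero, Int.sign_eq_one_of_pos hz]
    omega
  · simp only [oddExtension, Int.sign_eq_one_of_pos hy', Int.sign_eq_one_of_pos hz]
    omega

theorem natAbs_oddExtension {z : ℤ} (hz : z ≠ 0) : (oddExtension f z).natAbs = f z.natAbs := by
  rw [oddExtension, Int.natAbs_mul, Int.natAbs_sign_of_ne_zero hz, one_mul, Int.natAbs_natCast]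

theorem oddExtension_sign_mul {z : ℤ} {k : ℕ} (hk : k ≠ 0) (hz : f k = z.natAbs) :
    oddExtension f (z.sign * k) = z := by
  rcases eq_or_ne z 0 with rfl | hz0
  · simp [oddExtension]
  · rw [oddExtension, Int.sign_mul, Int.sign_sign, Int.sign_natCast_of_ne_zero hk, mul_one,
      Int.natAbs_mul, Int.natAbs_sign_of_ne_zero hz0, one_mul, Int.natAbs_natCast, hz,
      Int.sign_mul_natAbs]

end OddExtension

theorem isBalanced_comp_iff {V : Type*} {G : SimpleGraph V} {g : ℤ → ℤ} (hmono : StrictMono g)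
    (hodd : Function.Odd g) {x : V → ℤ} : IsBalanced G (g ∘ x) ↔ IsBalanced G x := by
  have hle : ∀ y z : ℤ, 0 ≤ g y + g z ↔ 0 ≤ y + z := fun y z => by
    rw [← neg_le_iff_add_nonneg', ← neg_le_iff_add_nonneg', ← hodd, hmono.le_iff_le]
  have heq : ∀ y z : ℤ, g y + g z = 0 ↔ y + z = 0 := fun y z => by
    rw [← neg_eq_iff_add_eq_zero, ← neg_eq_iff_add_eq_zero, ← hodd, hmono.injective.eq_iff]
  have hzero : ∀ y : ℤ, g y = 0 ↔ y = 0 := fun _ => hmono.injective.eq_iff' hodd.map_zero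
  constructor
  · refine fun hx => ⟨fun v w hvw => (hle _ _).1 (hx.add_nonneg hvw), fun v hv => ?_,
      fun v hv => (hzero _).1 (hx.eq_zero v hv)⟩
    obtain ⟨w, hvw, hw⟩ := hx.exists_adj_add_eq_zero v hv
    exact ⟨w, hvw, (heq _ _).1 hw⟩
  · refine fun hx => ⟨fun v w hvw => (hle _ _).2 (hx.add_nonneg hvw), fun v hv => ?_,
      fun v hv => (hzero _).2 (hx.eq_zero v hv)⟩
    obtain ⟨w, hvw, hw⟩ := hx.exists_adj_add_eq_zero v hv
    exact ⟨w, hvw, (heq _ _).2 hw⟩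

section Relabelling

variable {V : Type*} [Fintype V] {f : ℕ → ℕ}

theorem absValues_oddExtension_comp (hf : StrictMono f) (x : V → ℤ) :
    absValues (oddExtension f ∘ x) = (absValues x).image f := by
  have hzero : ∀ z : ℤ, (oddExtension f z).natAbs ≠ 0 ↔ z ≠ 0 := fun z => by
    rw [Int.natAbs_ne_zero,
      (oddExtension_strictMono hf).injective.ne_iff' (odd_oddExtension f).map_zero]
  ext k
  simp only [mem_absValues, mem_image, Function.comp_apply]
  constructor
  · rintro ⟨hk, v, rfl⟩
    have hv := (hzero _).1 hk
    exact ⟨_, ⟨Int.natAbs_ne_zero.2 hv, v, rfl⟩, (natAbs_oddExtension hv).symm⟩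
  · rintro ⟨_, ⟨hk, v, rfl⟩, rfl⟩
    have hv := Int.natAbs_ne_zero.1 hk
    have habs := natAbs_oddExtension (f := f) hv
    exact ⟨habs ▸ (hzero _).2 hv, v, habs⟩

theorem exists_oddExtension_comp_eq {y : V → ℤ} {T : Finset ℕ} (hT : 0 ∉ T)
    (hy : absValues y ⊆ T.image f) : ∃ x, oddExtension f ∘ x = y := by
  have hrange : ∀ v, ∃ z, oddExtension f z = y v := by
    intro v
    by_cases hv : (y v).natAbs = 0
    · exact ⟨0, by simp [oddExtension, Int.natAbs_eq_zero.1 hv]⟩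
    · obtain ⟨k, hk, hfk⟩ := mem_image.1 (hy (mem_absValues.2 ⟨hv, v, rfl⟩))
      exact ⟨_, oddExtension_sign_mul (fun h => hT (h ▸ hk)) hfk⟩
  choose x hx using hrange
  exact ⟨x, funext hx⟩

theorem image_oddExtension_comp_balancedWithAbsValues (hf : StrictMono f) (G : SimpleGraph V)
    {T : Finset ℕ} (hT : 0 ∉ T) :
    (oddExtension f ∘ ·) '' balancedWithAbsValues G T =
      balancedWithAbsValues G (T.image f) := by
  have hbal : ∀ x, IsBalanced G (oddExtension f ∘ x) ↔ IsBalanced G x := fun _ =>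
    isBalanced_comp_iff (oddExtension_strictMono hf) (odd_oddExtension f)
  ext y
  constructor
  · rintro ⟨x, ⟨hx, rfl⟩, rfl⟩
    exact ⟨(hbal x).2 hx, absValues_oddExtension_comp hf x⟩
  · rintro ⟨hy, hval⟩
    obtain ⟨x, rfl⟩ := exists_oddExtension_comp_eq hT hval.subset
    refine ⟨x, ⟨(hbal x).1 hy, image_injective hf.injective ?_⟩, rfl⟩
    rw [← absValues_oddExtension_comp hf, hval]

theorem ncard_balancedWithAbsValues_eq_Icc_card (G : SimpleGraph V) {S : Finset ℕ} (h0 : 0 ∉ S) :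
    (balancedWithAbsValues G S).ncard = (balancedWithAbsValues G (Icc 1 #S)).ncard := by
  obtain ⟨f, hf, hS⟩ := exists_strictMono_image_Icc_one_card_eq h0
  conv_lhs => rw [← hS]
  rw [← image_oddExtension_comp_balancedWithAbsValues hf G (by simp),
    Set.ncard_image_of_injective _ (oddExtension_strictMono hf).injective.comp_left]

end Relabelling

theorem card_isBasicCover_eq_sum_choose {n : ℕ} (G : SimpleGraph (Fin n)) (h : ℕ) :
    Nat.card {α : Fin n → ℕ // IsBasicCover G (2 * h) α} =
      ∑ m ∈ range (h + 1), h.choose m * (balancedWithAbsValues G (Icc 1 m)).ncard :=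
  calc Nat.card {α : Fin n → ℕ // IsBasicCover G (2 * h) α}
    _ = {x | IsBalanced G x ∧ absValues x ⊆ Icc 1 h}.ncard := by
      rw [← image_recenter, (injOn_recenter G h).ncard_image]
      rfl
    _ = ∑ S ∈ (Icc 1 h).powerset, (balancedWithAbsValues G S).ncard :=
      ncard_isBalanced_absValues_subset G _
    _ = ∑ S ∈ (Icc 1 h).powerset, (balancedWithAbsValues G (Icc 1 #S)).ncard :=
      sum_congr rfl fun S hS => ncard_balancedWithAbsValues_eq_Icc_card G fun h0 => by
        simpa using mem_powerset.1 hS h0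
    _ = ∑ m ∈ range (h + 1), h.choose m * (balancedWithAbsValues G (Icc 1 m)).ncard := by
      rw [sum_powerset_apply_card fun m => (balancedWithAbsValues G (Icc 1 m)).ncard]
      simp

theorem IsBalanced.hasFreeParameterSet {n r : ℕ} {G : SimpleGraph (Fin n)} {x : Fin n → ℤ}
    (hx : IsBalanced G x) (hval : absValues x = Icc 1 r) : HasFreeParameterSet G r := by
  have hedge : ∀ i : Fin r, ∃ a b, G.Adj a b ∧ x a = -((i : ℤ) + 1) ∧ x b = (i : ℤ) + 1 := by
    intro i
    have hmem : (i : ℕ) + 1 ∈ absValues x := hval ▸ mem_Icc.2 ⟨by omega, i.2⟩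
    obtain ⟨-, v, hv⟩ := mem_absValues.1 hmem
    have hsupp : v ∈ G.support := by
      by_contra hsupp
      simp [hx.eq_zero v hsupp] at hv
    obtain ⟨w, hvw, hw⟩ := hx.exists_adj_add_eq_zero v hsupp
    rcases le_total 0 (x v) with h | h
    · exact ⟨w, v, hvw.symm, by omega, by omega⟩
    · exact ⟨v, w, hvw, by omega, by omega⟩
  choose a b hab ha hb using hedge
  refine ⟨a, b, fun i j hij => ?_, fun i j hij => ?_, fun i j hij => ?_, fun i j hij => ?_, hab,
    fun i j hij => ?_⟩
  · have := congrArg x hij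
    rw [ha, ha] at this
    omega
  · have := congrArg x hij
    rw [hb, hb] at this
    omega
  · have := hx.add_nonneg hij
    rw [ha, ha] at this
    omega
  · have := congrArg x hij
    rw [ha, hb] at this
    omega
  · have := hx.add_nonneg hij
    rw [ha, hb] at this
    omega

/-- The least value of `p` on the neighbours of `v`; it is `0` if `v` is isolated. -/
noncomputable def neighborMin {V : Type*} (G : SimpleGraph V) (p : V → ℕ) (v : V) : ℕ :=
  sInf (p '' G.neighborSet v)

/-- The values `p v` minus the least value of `p` around `v`. Adjacent values of this function
always have nonnegative sum, which makes it a candidate for a balanced function. -/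
noncomputable def subNeighborMin {V : Type*} (G : SimpleGraph V) (p : V → ℕ) (v : V) : ℤ :=
  p v - neighborMin G p v

section NeighborMin

variable {V : Type*} {G : SimpleGraph V} {p : V → ℕ} {v w : V}

theorem neighborMin_le (hvw : G.Adj v w) : neighborMin G p v ≤ p w :=
  Nat.sInf_le (Set.mem_image_of_mem p hvw)

theorem exists_adj_eq_neighborMin (hv : v ∈ G.support) :
    ∃ w, G.Adj v w ∧ p w = neighborMin G p v := by
  obtain ⟨w, hvw⟩ := hv
  exact Nat.sInf_mem (s := p '' G.neighborSet v) ⟨p w, w, hvw, rfl⟩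

theorem neighborMin_of_notMem_support (hv : v ∉ G.support) : neighborMin G p v = 0 := by
  have hempty : G.neighborSet v = ∅ := Set.eq_empty_of_forall_notMem fun w hvw => hv ⟨w, hvw⟩
  rw [neighborMin, hempty, Set.image_empty, Nat.sInf_empty]

theorem isBalanced_subNeighborMin
    (hp : ∀ v, p v ≠ 0 → ∃ w, G.Adj v w ∧ p w = 0 ∧ neighborMin G p w = p v) :
    IsBalanced G (subNeighborMin G p) where
  add_nonneg v w hvw := by
    have := neighborMin_le (p := p) hvw
    have := neighborMin_le (p := p) hvw.symm
    unfold subNeighborMin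
    omega
  exists_adj_add_eq_zero v hv := by
    unfold subNeighborMin
    by_cases hpv : p v = 0
    · obtain ⟨w, hvw, hw⟩ := exists_adj_eq_neighborMin (p := p) hv
      have := neighborMin_le (p := p) hvw.symm
      exact ⟨w, hvw, by omega⟩
    · obtain ⟨w, hvw, hw, hmin⟩ := hp v hpv
      have := neighborMin_le (p := p) hvw
      exact ⟨w, hvw, by omega⟩
  eq_zero v hv := by
    have hpv : p v = 0 := by
      by_contra hpv
      obtain ⟨w, hvw, -⟩ := hp v hpv
      exact hv ⟨w, hvw⟩
    simp [subNeighborMin, hpv, neighborMin_of_notMem_support hv]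

theorem absValues_subNeighborMin [Fintype V]
    (hp : ∀ v, p v ≠ 0 → ∃ w, G.Adj v w ∧ p w = 0) :
    absValues (subNeighborMin G p) = (univ.image p).erase 0 := by
  have hmin : ∀ v, p v ≠ 0 → neighborMin G p v = 0 := fun v hv => by
    obtain ⟨w, hvw, hw⟩ := hp v hv
    exact Nat.le_zero.1 (hw ▸ neighborMin_le hvw)
  ext k
  simp only [mem_absValues, mem_erase, mem_image, mem_univ, true_and,
    subNeighborMin]
  refine and_congr_right fun hk => ⟨?_, ?_⟩
  · rintro ⟨v, hv⟩
    by_cases hpv : p v = 0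
    · have hsupp : v ∈ G.support := by
        by_contra hsupp
        have := neighborMin_of_notMem_support (p := p) hsupp
        omega
      obtain ⟨w, -, hw⟩ := exists_adj_eq_neighborMin (p := p) hsupp
      exact ⟨w, by omega⟩
    · have := hmin v hpv
      exact ⟨v, by omega⟩
  · rintro ⟨v, rfl⟩
    have := hmin v hk
    exact ⟨v, by omega⟩

end NeighborMin

/-- The largest `i + 1` such that `a i` is adjacent to `v`; it is `0` if there is none. The shift
by one makes the parameters `a 0, …, a (r - 1)` account for the values `1, …, r`. -/
noncomputable def lastAdjIndex {V : Type*} (G : SimpleGraph V) {r : ℕ} (a : Fin r → V) (v : V) :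
    ℕ :=
  sSup ((fun i : Fin r => (i : ℕ) + 1) '' {i | G.Adj (a i) v})

section LastAdjIndex

variable {V : Type*} {G : SimpleGraph V} {r : ℕ} {a : Fin r → V} {v : V}

theorem add_one_le_lastAdjIndex {i : Fin r} (hi : G.Adj (a i) v) :
    (i : ℕ) + 1 ≤ lastAdjIndex G a v :=
  le_csSup (Set.toFinite _).bddAbove ⟨i, hi, rfl⟩

theorem exists_adj_eq_lastAdjIndex (hv : lastAdjIndex G a v ≠ 0) :
    ∃ i : Fin r, G.Adj (a i) v ∧ (i : ℕ) + 1 = lastAdjIndex G a v := by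
  have hne : ((fun i : Fin r => (i : ℕ) + 1) '' {i | G.Adj (a i) v}).Nonempty := by
    by_contra! hempty
    exact hv (by rw [lastAdjIndex, hempty, csSup_empty, bot_eq_zero])
  exact Nat.sSup_mem hne (Set.toFinite _).bddAbove

end LastAdjIndex

namespace IsFreeParameterPair

variable {n r : ℕ} {G : SimpleGraph (Fin n)} {a b : Fin r → Fin n}

theorem lastAdjIndex_left (hab : IsFreeParameterPair G a b) (i : Fin r) :
    lastAdjIndex G a (a i) = 0 := by
  obtain ⟨-, -, hindep, -⟩ := hab
  by_contra h
  obtain ⟨j, hj, -⟩ := exists_adj_eq_lastAdjIndex h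
  exact hindep j i hj

theorem lastAdjIndex_right (hab : IsFreeParameterPair G a b) (i : Fin r) :
    lastAdjIndex G a (b i) = i + 1 := by
  obtain ⟨-, -, -, -, hadj, hle⟩ := hab
  have hlower := add_one_le_lastAdjIndex (hadj i)
  obtain ⟨j, hj, hji⟩ := exists_adj_eq_lastAdjIndex (Nat.ne_zero_of_lt hlower)
  have : (j : ℕ) ≤ i := hle j i hj
  omega

theorem neighborMin_lastAdjIndex (hab : IsFreeParameterPair G a b) (i : Fin r) :
    neighborMin G (lastAdjIndex G a) (a i) = i + 1 := by
  have hadj : G.Adj (a i) (b i) := hab.2.2.2.2.1 i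
  obtain ⟨w, hw, hmin⟩ := exists_adj_eq_neighborMin (p := lastAdjIndex G a) hadj.mem_support_left
  refine le_antisymm ((neighborMin_le hadj).trans_eq (hab.lastAdjIndex_right i)) ?_
  exact hmin ▸ add_one_le_lastAdjIndex hw

theorem image_lastAdjIndex_erase_zero (hab : IsFreeParameterPair G a b) :
    (univ.image (lastAdjIndex G a)).erase 0 = Icc 1 r := by
  ext k
  simp only [mem_erase, mem_image, mem_univ, true_and, mem_Icc]
  constructor
  · rintro ⟨hk, v, rfl⟩
    obtain ⟨i, -, hi⟩ := exists_adj_eq_lastAdjIndex hk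
    omega
  · rintro ⟨hk1, hkr⟩
    have := hab.lastAdjIndex_right ⟨k - 1, by omega⟩
    exact ⟨by omega, b ⟨k - 1, by omega⟩, by simpa [Nat.sub_add_cancel hk1] using this⟩

theorem exists_mem_balancedWithAbsValues (hab : IsFreeParameterPair G a b) :
    ∃ x, x ∈ balancedWithAbsValues G (Icc 1 r) := by
  have hp : ∀ v, lastAdjIndex G a v ≠ 0 → ∃ w, G.Adj v w ∧ lastAdjIndex G a w = 0 ∧
      neighborMin G (lastAdjIndex G a) w = lastAdjIndex G a v := fun v hv => by
    obtain ⟨i, hi, hiv⟩ := exists_adj_eq_lastAdjIndex hv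
    exact ⟨a i, hi.symm, hab.lastAdjIndex_left i, (hab.neighborMin_lastAdjIndex i).trans hiv⟩
  refine ⟨subNeighborMin G (lastAdjIndex G a), isBalanced_subNeighborMin hp, ?_⟩
  rw [absValues_subNeighborMin fun v hv => (hp v hv).imp fun w hw => ⟨hw.1, hw.2.1⟩,
    hab.image_lastAdjIndex_erase_zero]

end IsFreeParameterPair

theorem ncard_balancedWithAbsValues_Icc_ne_zero_iff {n r : ℕ} {G : SimpleGraph (Fin n)} :
    (balancedWithAbsValues G (Icc 1 r)).ncard ≠ 0 ↔ HasFreeParameterSet G r := by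
  rw [← Nat.pos_iff_ne_zero, Set.ncard_pos (finite_balancedWithAbsValues G _)]
  exact ⟨fun ⟨_, hx, hval⟩ => hx.hasFreeParameterSet hval,
    fun ⟨_, _, hab⟩ => hab.exists_mem_balancedWithAbsValues⟩

theorem isGreatest_gdim_sub_one {n : ℕ} (G : SimpleGraph (Fin n)) :
    IsGreatest {r : ℕ | HasFreeParameterSet G r} (gdim G - 1) := by
  have hbdd : BddAbove {r : ℕ | HasFreeParameterSet G r} := by
    refine ⟨n, ?_⟩
    rintro r ⟨a, b, ha, -⟩
    simpa using Fintype.card_le_of_injective a ha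
  have hzero : HasFreeParameterSet G 0 :=
    ⟨Fin.elim0, Fin.elim0, by simp [IsFreeParameterPair, Function.injective_of_subsingleton]⟩
  exact ⟨Nat.sSup_mem ⟨0, hzero⟩ hbdd, fun r hr => le_csSup hbdd hr⟩

section Polynomial

open Polynomial

theorem degree_sum_C_mul_of_degree_eq {R : Type*} [Semiring R] [NoZeroDivisors R] {p : ℕ → R[X]}
    (hp : ∀ m, (p m).degree = m) {c : ℕ → R} {d : ℕ} (hd : c d ≠ 0) :
    (∑ m ∈ range (d + 1), C (c m) * p m).degree = d := by
  have htop : (C (c d) * p d).degree = d := by rw [degree_C_mul hd, hp]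
  rw [sum_range_succ, degree_add_eq_right_of_degree_lt, htop]
  rw [htop, ← mem_degreeLT]
  refine Submodule.sum_mem _ fun m hm => ?_
  rw [C_mul', mem_degreeLT]
  exact (degree_smul_le _ _).trans_lt ((hp m).trans_lt (Nat.cast_lt.2 (mem_range.1 hm)))

theorem exists_polynomial_eval_eq_sum_choose_mul {K : Type*} [Field K] [CharZero K] {c : ℕ → K}
    {d : ℕ} (hd : c d ≠ 0) (hc : ∀ m, d < m → c m = 0) :
    ∃ P : K[X], P.degree = d ∧
      ∀ h : ℕ, P.eval (h : K) = ∑ m ∈ range (h + 1), h.choose m * c m := by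
  have hdeg : ∀ m, (descPochhammer K m).degree = m := fun m => by
    rw [degree_eq_natDegree (monic_descPochhammer K m).ne_zero, descPochhammer_natDegree]
  refine ⟨∑ m ∈ range (d + 1), C (c m / m.factorial) * descPochhammer K m,
    degree_sum_C_mul_of_degree_eq hdeg (c := fun m => c m / m.factorial)
      (div_ne_zero hd (Nat.cast_ne_zero.2 d.factorial_ne_zero)), fun h => ?_⟩
  calc (∑ m ∈ range (d + 1), C (c m / m.factorial) * descPochhammer K m).eval (h : K)
    _ = ∑ m ∈ range (d + 1), h.choose m * c m := by
      rw [eval_finsetSum]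
      refine sum_congr rfl fun m _ => ?_
      rw [eval_mul, eval_C, Nat.cast_choose_eq_descPochhammer_div]
      ring
    _ = ∑ m ∈ range (max d h + 1), h.choose m * c m :=
      sum_subset (range_subset_range.2 (by omega)) fun m _ hm => by
        rw [hc m (by simpa using hm), mul_zero]
    _ = ∑ m ∈ range (h + 1), h.choose m * c m :=
      (sum_subset (range_subset_range.2 (by omega)) fun m _ hm => by
        rw [Nat.choose_eq_zero_of_lt (by simpa using hm), Nat.cast_zero, zero_mul]).symm

end Polynomial

theorem exists_hilbert_polynomial_counting_basic_covers_general {n : ℕ}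
    (G : SimpleGraph (Fin n)) :
    ∃ P : Polynomial ℚ, P.degree = ((gdim G - 1 : ℕ) : WithBot ℕ) ∧
      ∀ h : ℕ, P.eval (h : ℚ) = Nat.card {α : Fin n → ℕ // IsBasicCover G (2 * h) α} := by
  obtain ⟨hmem, hub⟩ := isGreatest_gdim_sub_one G
  have htop : (balancedWithAbsValues G (Icc 1 (gdim G - 1))).ncard ≠ 0 :=
    ncard_balancedWithAbsValues_Icc_ne_zero_iff.2 hmem
  have hzero : ∀ m, gdim G - 1 < m → (balancedWithAbsValues G (Icc 1 m)).ncard = 0 :=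
    fun m hm => by_contra fun hne =>
      hm.not_ge (hub (ncard_balancedWithAbsValues_Icc_ne_zero_iff.1 hne))
  obtain ⟨P, hdeg, hP⟩ := exists_polynomial_eval_eq_sum_choose_mul
    (c := fun m => ((balancedWithAbsValues G (Icc 1 m)).ncard : ℚ))
    (Nat.cast_ne_zero.2 htop) fun m hm => Nat.cast_eq_zero.2 (hzero m hm)
  refine ⟨P, hdeg, fun h => ?_⟩
  rw [hP, card_isBasicCover_eq_sum_choose]
  push_cast
  rfl

/-- For a connected graph `G` there is a polynomial `P ∈ ℚ[t]` of degree
`gdim(G) − 1` such that for all sufficiently large `h`, `P(h)` equals the number of basic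
`2h`-covers of `G`. -/
theorem exists_hilbert_polynomial_counting_basic_covers {n : ℕ}
    (G : SimpleGraph (Fin n)) (hconn : G.Connected)
    (hiso : ∀ v : Fin n, ∃ w, G.Adj v w) :
    ∃ P : Polynomial ℚ, P.degree = ((gdim G - 1 : ℕ) : WithBot ℕ) ∧
      ∃ N : ℕ, ∀ h : ℕ, N ≤ h →
        P.eval (h : ℚ) = Nat.card {α : Fin n → ℕ // IsBasicCover G (2 * h) α} := by
  obtain ⟨P, hdeg, hP⟩ := exists_hilbert_polynomial_counting_basic_covers_general G
  exact ⟨P, hdeg, 0, fun h _ => hP h⟩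
end

section
/- Let G be a graph, k>0 a natural number, and α a basic k-cover of G. Set A_{k/2}={v∈V : α(v)≤k/2}. Then A_{k/2} is a point cover (dominating set) of G, and α is uniquely determined by its values on A_{k/2}: for every vertex w with α(w)>k/2 one has α(w)=max{k−α(v) : v∈A_{k/2} and {v,w}∈E}. -/
/-- The `k`-covers of a graph on an arbitrary vertex type; for `V = Fin n` this is `IsCover`.
Basic `k`-covers are encoded as `Minimal (IsKCover G k) α`, for the pointwise order on `V → ℕ`. -/
def IsKCover {V : Type*} (G : SimpleGraph V) (k : ℕ) (α : V → ℕ) : Prop :=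
  ∀ ⦃i j : V⦄, G.Adj i j → k ≤ α i + α j

section

variable {V : Type*} {G : SimpleGraph V} {k : ℕ} {α : V → ℕ} {w : V}

lemma IsKCover.update [DecidableEq V] (hα : IsKCover G k α) {c : ℕ}
    (hc : ∀ v, G.Adj v w → k ≤ α v + c) : IsKCover G k (Function.update α w c) := by
  intro i j hij
  rcases eq_or_ne i w with rfl | hi
  · rw [Function.update_self, Function.update_of_ne hij.ne', add_comm]
    exact hc j hij.symm
  rcases eq_or_ne j w with rfl | hj
  · rw [Function.update_self, Function.update_of_ne hi]
    exact hc i hij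
  · rw [Function.update_of_ne hi, Function.update_of_ne hj]
    exact hα hij

lemma IsKCover.le_of_minimal (hα : Minimal (IsKCover G k) α) {c : ℕ}
    (hc : ∀ v, G.Adj v w → k ≤ α v + c) : α w ≤ c := by
  classical
  by_contra! hlt
  have hle : α ≤ Function.update α w c :=
    hα.le_of_le (hα.prop.update hc) (update_le_self_iff.2 hlt.le)
  exact hlt.not_ge (by simpa using hle w)

lemma IsKCover.exists_adj_add_eq_of_minimal (hα : Minimal (IsKCover G k) α) (hw : 0 < α w) :
    ∃ v, G.Adj v w ∧ α v + α w = k := by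
  by_contra! hne
  have hlower : ∀ v, G.Adj v w → k ≤ α v + (α w - 1) := fun v hv => by
    have hlt : k < α v + α w := (hα.prop hv).lt_of_ne' (hne v hv)
    omega
  exact (Nat.sub_one_lt_of_lt hw).not_ge (IsKCover.le_of_minimal hα hlower)

theorem basicCover_determined_by_small_values_general (hα : Minimal (IsKCover G k) α)
    (hw : k < 2 * α w) :
    IsGreatest {m : ℕ | ∃ v : V, G.Adj v w ∧ 2 * α v ≤ k ∧ m = k - α v} (α w) := by
  constructor
  · obtain ⟨v, hv, htight⟩ := IsKCover.exists_adj_add_eq_of_minimal hα (w := w) (by omega)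
    exact ⟨v, hv, by omega, by omega⟩
  · rintro _ ⟨u, hu, -, rfl⟩
    exact Nat.sub_le_iff_le_add'.2 (hα.prop hu)

end

lemma IsBasicCover.minimal {n k : ℕ} {G : SimpleGraph (Fin n)} {α : Fin n → ℕ}
    (hα : IsBasicCover G k α) : Minimal (IsKCover G k) α :=
  ⟨hα.1, fun β hβ hle => (hα.2 β hle hβ).ge⟩

/-- Let `α` be a basic `k`-cover (`k > 0`) of a graph `G` and
`A_{k/2} = {v : α v ≤ k/2}`.  Then `A_{k/2}` is a point cover (dominating set) of `G`:
every vertex `w` with `α w > k/2` has a neighbour in `A_{k/2}`; moreover `α` is determined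
by its values on `A_{k/2}`: for every `w` with `α w > k/2` one has
`α w = max {k - α v : v ∈ A_{k/2}, {v,w} ∈ E}`. -/
theorem basicCover_determined_by_small_values {n k : ℕ} (G : SimpleGraph (Fin n))
    (hiso : ∀ v : Fin n, ∃ w, G.Adj v w)
    (hk : 0 < k) (α : Fin n → ℕ) (hα : IsBasicCover G k α) :
    (∀ w : Fin n, k < 2 * α w → ∃ v : Fin n, G.Adj v w ∧ 2 * α v ≤ k) ∧
    (∀ w : Fin n, k < 2 * α w →
      α w = sSup {m : ℕ | ∃ v : Fin n, G.Adj v w ∧ 2 * α v ≤ k ∧ m = k - α v}) := by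
  have hmax w (hw : k < 2 * α w) := basicCover_determined_by_small_values_general hα.minimal hw
  exact ⟨fun w hw => (hmax w hw).1.imp fun _ h => ⟨h.1, h.2.1⟩,
    fun w hw => (hmax w hw).csSup_eq.symm⟩
end

section
/- For every graph G the graphical dimension satisfies γ_P(G)/2 + 1 ≤ gdim(G) ≤ ν(G) + 1, where γ_P(G) is the paired-domination number and ν(G) is the matching number of G. -/
/-- `G` has a matching consisting of `r` pairwise disjoint edges. -/
def HasMatchingOfSize {n : ℕ} (G : SimpleGraph (Fin n)) (r : ℕ) : Prop :=
  ∃ e : Fin r → Fin n × Fin n, (∀ i, G.Adj (e i).1 (e i).2) ∧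
    ∀ i j : Fin r, i ≠ j →
      (e i).1 ≠ (e j).1 ∧ (e i).1 ≠ (e j).2 ∧ (e i).2 ≠ (e j).1 ∧ (e i).2 ≠ (e j).2

/-- The matching number `ν(G)`. -/
noncomputable def matchingNumber {n : ℕ} (G : SimpleGraph (Fin n)) : ℕ :=
  sSup {r : ℕ | HasMatchingOfSize G r}

/-- A paired-dominating set: a dominating set whose induced subgraph has a perfect matching. -/
def IsPairedDominatingSet {n : ℕ} (G : SimpleGraph (Fin n)) (s : Finset (Fin n)) : Prop :=
  (∀ v : Fin n, v ∉ s → ∃ w ∈ s, G.Adj v w) ∧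
  ∃ r : ℕ, ∃ e : Fin r → Fin n × Fin n, (∀ i, G.Adj (e i).1 (e i).2) ∧
    (∀ i j : Fin r, i ≠ j →
      (e i).1 ≠ (e j).1 ∧ (e i).1 ≠ (e j).2 ∧ (e i).2 ≠ (e j).1 ∧ (e i).2 ≠ (e j).2) ∧
    (∀ i, (e i).1 ∈ s ∧ (e i).2 ∈ s) ∧
    (∀ v ∈ s, ∃ i, v = (e i).1 ∨ v = (e i).2)

/-- The paired-domination number `γ_P(G)`. -/
noncomputable def pairedDominationNumber {n : ℕ} (G : SimpleGraph (Fin n)) : ℕ :=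
  sInf {m : ℕ | ∃ s : Finset (Fin n), IsPairedDominatingSet G s ∧ s.card = m}

/-! The edges `{a i, b i}` of a free parameter pair are pairwise disjoint, whence the upper bound.
For the lower bound, take a free parameter pair of maximal size. If a non-isolated vertex `v` had no
neighbor among the `a i` and `b i`, then `v` and any neighbor of it could be appended to the pair.
So the edges `{a i, b i}` form a perfect matching on a dominating set. -/

/-- An ordered matching: the pairs `e i` are pairwise disjoint edges of `G`. This is the condition
on `e` shared by `HasMatchingOfSize` and `IsPairedDominatingSet`. -/
def IsMatchingFamily {n r : ℕ} (G : SimpleGraph (Fin n)) (e : Fin r → Fin n × Fin n) : Prop :=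
  (∀ i, G.Adj (e i).1 (e i).2) ∧
    ∀ i j : Fin r, i ≠ j →
      (e i).1 ≠ (e j).1 ∧ (e i).1 ≠ (e j).2 ∧ (e i).2 ≠ (e j).1 ∧ (e i).2 ≠ (e j).2

/-- The set of vertices covered by a family of vertex pairs, such as the edges of a matching. -/
def coveredVertices {n r : ℕ} (e : Fin r → Fin n × Fin n) : Finset (Fin n) :=
  Finset.univ.biUnion fun i => {(e i).1, (e i).2}

section CoveredVertices

variable {n r : ℕ} {e : Fin r → Fin n × Fin n}

theorem mem_coveredVertices {v : Fin n} :
    v ∈ coveredVertices e ↔ ∃ i, v = (e i).1 ∨ v = (e i).2 := by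
  simp [coveredVertices]

theorem fst_mem_coveredVertices (i : Fin r) : (e i).1 ∈ coveredVertices e :=
  mem_coveredVertices.2 ⟨i, .inl rfl⟩

theorem snd_mem_coveredVertices (i : Fin r) : (e i).2 ∈ coveredVertices e :=
  mem_coveredVertices.2 ⟨i, .inr rfl⟩

theorem card_coveredVertices_le (e : Fin r → Fin n × Fin n) :
    (coveredVertices e).card ≤ 2 * r :=
  calc (coveredVertices e).card
      ≤ (Finset.univ : Finset (Fin r)).card * 2 :=
        Finset.card_biUnion_le_card_mul _ _ _ fun _ _ => Finset.card_le_two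
    _ = 2 * r := by rw [Finset.card_fin, mul_comm]

end CoveredVertices

section Graph

variable {n r : ℕ} {G : SimpleGraph (Fin n)}

theorem HasMatchingOfSize.le_order (h : HasMatchingOfSize G r) : r ≤ n := by
  obtain ⟨e, -, hdisj⟩ := h
  have hinj : Function.Injective fun i => (e i).1 := fun i j hij => by
    by_contra hne
    exact (hdisj i j hne).1 hij
  simpa using Fintype.card_le_of_injective _ hinj

theorem HasMatchingOfSize.le_matchingNumber (h : HasMatchingOfSize G r) :
    r ≤ matchingNumber G :=
  le_csSup ⟨n, fun _ h' => h'.le_order⟩ h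

theorem IsMatchingFamily.isPairedDominatingSet {e : Fin r → Fin n × Fin n}
    (he : IsMatchingFamily G e)
    (hdom : ∀ v ∉ coveredVertices e, ∃ w ∈ coveredVertices e, G.Adj v w) :
    IsPairedDominatingSet G (coveredVertices e) :=
  ⟨hdom, r, e, he.1, he.2,
    fun i => ⟨fst_mem_coveredVertices i, snd_mem_coveredVertices i⟩,
    fun _ hv => mem_coveredVertices.1 hv⟩

theorem IsPairedDominatingSet.pairedDominationNumber_le {s : Finset (Fin n)}
    (hs : IsPairedDominatingSet G s) : pairedDominationNumber G ≤ s.card :=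
  Nat.sInf_le ⟨s, hs, rfl⟩

namespace IsFreeParameterPair

variable {a b : Fin r → Fin n}

theorem isMatchingFamily (h : IsFreeParameterPair G a b) :
    IsMatchingFamily G fun i => (a i, b i) := by
  obtain ⟨ha, hb, -, hab, hadj, -⟩ := h
  exact ⟨hadj, fun i j hij => ⟨ha.ne hij, hab i j, (hab j i).symm, hb.ne hij⟩⟩

theorem snoc (h : IsFreeParameterPair G a b) {v w : Fin n} (hvw : G.Adj v w)
    (hva : ∀ i, ¬ G.Adj v (a i)) (hvb : ∀ i, ¬ G.Adj v (b i)) :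
    IsFreeParameterPair G (Fin.snoc a v : Fin (r + 1) → Fin n)
      (Fin.snoc b w : Fin (r + 1) → Fin n) := by
  obtain ⟨ha, hb, hind, hab, hadj, hle⟩ := h
  have a_ne_v (i) : a i ≠ v := fun hi => hvb i (hi ▸ hadj i)
  have v_ne_b (i) : v ≠ b i := fun hi => hva i (hi ▸ (hadj i).symm)
  have a_ne_w (i) : a i ≠ w := fun hi => hva i (hi ▸ hvw)
  have b_ne_w (i) : b i ≠ w := fun hi => hvb i (hi ▸ hvw)
  refine ⟨?_, ?_, fun i j => ?_, fun i j => ?_, fun i => ?_, fun i j => ?_⟩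
  · exact Fin.snoc_injective_iff.2 ⟨ha, fun ⟨i, hi⟩ => a_ne_v i hi⟩
  · exact Fin.snoc_injective_iff.2 ⟨hb, fun ⟨i, hi⟩ => b_ne_w i hi⟩
  · cases i using Fin.lastCases <;> cases j using Fin.lastCases <;>
      simp [hind, hva, G.adj_comm _ v]
  · cases i using Fin.lastCases <;> cases j using Fin.lastCases <;>
      simp [hab, a_ne_w, v_ne_b, hvw.ne]
  · cases i using Fin.lastCases <;> simp [hadj, hvw]
  · cases j using Fin.lastCases with
    | last => exact fun _ => Fin.le_last i
    | cast j =>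
      cases i using Fin.lastCases with
      | last => simp [hvb]
      | cast i => simpa using hle i j

theorem exists_adj_of_maximal (h : IsFreeParameterPair G a b)
    (hmax : ¬ HasFreeParameterSet G (r + 1)) {v w : Fin n} (hvw : G.Adj v w) :
    ∃ i, G.Adj v (a i) ∨ G.Adj v (b i) := by
  by_contra! hv
  exact hmax ⟨_, _, h.snoc hvw (fun i => (hv i).1) (fun i => (hv i).2)⟩

theorem pairedDominationNumber_le_of_maximal (h : IsFreeParameterPair G a b)
    (hmax : ¬ HasFreeParameterSet G (r + 1)) (hiso : ∀ v : Fin n, ∃ w, G.Adj v w) :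
    pairedDominationNumber G ≤ 2 * r := by
  have hdom (v : Fin n) : ∃ w ∈ coveredVertices fun i => (a i, b i), G.Adj v w := by
    obtain ⟨w, hvw⟩ := hiso v
    obtain ⟨i, hva | hvb⟩ := h.exists_adj_of_maximal hmax hvw
    · exact ⟨a i, fst_mem_coveredVertices i, hva⟩
    · exact ⟨b i, snd_mem_coveredVertices i, hvb⟩
  exact (h.isMatchingFamily.isPairedDominatingSet fun v _ => hdom v).pairedDominationNumber_le.trans
    (card_coveredVertices_le _)

end IsFreeParameterPair

namespace HasFreeParameterSet

theorem zero (G : SimpleGraph (Fin n)) : HasFreeParameterSet G 0 :=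
  ⟨Fin.elim0, Fin.elim0, by simp [IsFreeParameterPair, Function.injective_of_subsingleton]⟩

theorem hasMatchingOfSize (h : HasFreeParameterSet G r) : HasMatchingOfSize G r := by
  obtain ⟨a, b, hab⟩ := h
  exact ⟨_, hab.isMatchingFamily⟩

theorem bddAbove (G : SimpleGraph (Fin n)) : BddAbove {r : ℕ | HasFreeParameterSet G r} :=
  ⟨n, fun _ h => h.hasMatchingOfSize.le_order⟩

theorem lt_gdim (h : HasFreeParameterSet G r) : r < gdim G :=
  Nat.lt_succ_of_le (le_csSup (bddAbove G) h)

theorem exists_gdim_eq (G : SimpleGraph (Fin n)) :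
    ∃ r, HasFreeParameterSet G r ∧ gdim G = r + 1 :=
  ⟨_, Nat.sSup_mem ⟨0, zero G⟩ (bddAbove G), rfl⟩

end HasFreeParameterSet

theorem gdim_le_matchingNumber_add_one (G : SimpleGraph (Fin n)) :
    gdim G ≤ matchingNumber G + 1 := by
  obtain ⟨r, hr, hgdim⟩ := HasFreeParameterSet.exists_gdim_eq G
  rw [hgdim]
  exact Nat.succ_le_succ hr.hasMatchingOfSize.le_matchingNumber

theorem pairedDominationNumber_add_two_le_two_mul_gdim (hiso : ∀ v : Fin n, ∃ w, G.Adj v w) :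
    pairedDominationNumber G + 2 ≤ 2 * gdim G := by
  obtain ⟨r, ⟨a, b, hab⟩, hgdim⟩ := HasFreeParameterSet.exists_gdim_eq G
  have hmax : ¬ HasFreeParameterSet G (r + 1) := fun h => h.lt_gdim.ne hgdim.symm
  have hpaired := hab.pairedDominationNumber_le_of_maximal hmax hiso
  omega

end Graph

/-- For every graph `G` (no isolated vertices):
`γ_P(G)/2 + 1 ≤ gdim(G) ≤ ν(G) + 1`. -/
theorem gdim_bounds {n : ℕ} (G : SimpleGraph (Fin n))
    (hiso : ∀ v : Fin n, ∃ w, G.Adj v w) :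
    pairedDominationNumber G / 2 + 1 ≤ gdim G ∧ gdim G ≤ matchingNumber G + 1 := by
  have hlower := pairedDominationNumber_add_two_le_two_mul_gdim hiso
  exact ⟨by omega, gdim_le_matchingNumber_add_one G⟩
end
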